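/- arXiv:2411.04514 — 2 statements merged into one kernel-verified Lean document; each statement's English description precedes it below -/
import Mathlib

section
/- Let R and S be associative unital rings, F a flat right R-module, Y an (R,S)-bimodule, and N a pure-injective right S-module. Then for every j ≥ 0 there is a natural isomorphism of abelian groups Ext^j_S(F ⊗_R Y, N) ≅ Hom_R(F, Ext^j_S(Y, N)). -/
open CategoryTheory Opposite

noncomputable section

section Tensor

variable (T : Type) [Ring T]

/-- The defining relations of the balanced tensor product `P ⊗_T A` of a right `T`-module
`P` and a left `T`-module `A`, inside the abelian group `A ⊗_ℤ P`. -/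
def balRel (P : Type) [AddCommGroup P] [Module Tᵐᵒᵖ P]
    (A : Type) [AddCommGroup A] [Module T A] : Submodule ℤ (TensorProduct ℤ A P) :=
  Submodule.span ℤ {x | ∃ (t : T) (a : A) (p : P),
    x = (t • a) ⊗ₜ[ℤ] p - a ⊗ₜ[ℤ] (MulOpposite.op t • p)}

/-- The balanced tensor product `P ⊗_T A` (as an abelian group). -/
def Bal (P : Type) [AddCommGroup P] [Module Tᵐᵒᵖ P]
    (A : Type) [AddCommGroup A] [Module T A] : Type :=
  TensorProduct ℤ A P ⧸ balRel T P A

instance (P : Type) [AddCommGroup P] [Module Tᵐᵒᵖ P]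
    (A : Type) [AddCommGroup A] [Module T A] : AddCommGroup (Bal T P A) :=
  inferInstanceAs (AddCommGroup (TensorProduct ℤ A P ⧸ balRel T P A))

/-- Functoriality of `P ⊗_T -` in the left-module variable. -/
def balMapLeft (P : Type) [AddCommGroup P] [Module Tᵐᵒᵖ P]
    {A B : Type} [AddCommGroup A] [Module T A] [AddCommGroup B] [Module T B]
    (g : A →ₗ[T] B) : Bal T P A →ₗ[ℤ] Bal T P B :=
  Submodule.mapQ (balRel T P A) (balRel T P B)
    (TensorProduct.map g.toAddMonoidHom.toIntLinearMap LinearMap.id)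
    (by
      rw [balRel, Submodule.span_le]
      rintro x ⟨t, a, p, rfl⟩
      change (TensorProduct.map g.toAddMonoidHom.toIntLinearMap LinearMap.id) _ ∈ balRel T P B
      simp only [SetLike.mem_coe, Submodule.mem_comap, map_sub, TensorProduct.map_tmul,
        LinearMap.id_apply, AddMonoidHom.coe_toIntLinearMap, LinearMap.toAddMonoidHom_coe,
        g.map_smul]
      exact Submodule.subset_span ⟨t, g a, p, rfl⟩)

/-- Functoriality of `- ⊗_T A` in the right-module variable. -/
def balMapRight {P Q : Type} [AddCommGroup P] [Module Tᵐᵒᵖ P] [AddCommGroup Q] [Module Tᵐᵒᵖ Q]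
    (A : Type) [AddCommGroup A] [Module T A]
    (i : P →ₗ[Tᵐᵒᵖ] Q) : Bal T P A →ₗ[ℤ] Bal T Q A :=
  Submodule.mapQ (balRel T P A) (balRel T Q A)
    (TensorProduct.map LinearMap.id i.toAddMonoidHom.toIntLinearMap)
    (by
      rw [balRel, Submodule.span_le]
      rintro x ⟨t, a, p, rfl⟩
      change (TensorProduct.map LinearMap.id i.toAddMonoidHom.toIntLinearMap) _ ∈ balRel T Q A
      simp only [SetLike.mem_coe, Submodule.mem_comap, map_sub, TensorProduct.map_tmul,
        LinearMap.id_apply, AddMonoidHom.coe_toIntLinearMap, LinearMap.toAddMonoidHom_coe,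
        i.map_smul]
      exact Submodule.subset_span ⟨t, a, i p, rfl⟩)

/-- A right `T`-module `P` is flat if `P ⊗_T -` preserves injectivity. -/
def RightFlat (P : Type) [AddCommGroup P] [Module Tᵐᵒᵖ P] : Prop :=
  ∀ (A B : Type) [AddCommGroup A] [Module T A] [AddCommGroup B] [Module T B]
    (g : A →ₗ[T] B), Function.Injective g → Function.Injective (balMapLeft T P g)

/-- A map of right `T`-modules is a pure monomorphism if it is injective and remains
injective after tensoring with any left `T`-module. -/
def IsPureMonoRight {P Q : Type} [AddCommGroup P] [Module Tᵐᵒᵖ P] [AddCommGroup Q]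
    [Module Tᵐᵒᵖ Q] (i : P →ₗ[Tᵐᵒᵖ] Q) : Prop :=
  Function.Injective i ∧
    ∀ (A : Type) [AddCommGroup A] [Module T A], Function.Injective (balMapRight T A i)

/-- A right `T`-module `N` is pure-injective if it is injective with respect to pure
monomorphisms of right `T`-modules. -/
def PureInjectiveRight (N : Type) [AddCommGroup N] [Module Tᵐᵒᵖ N] : Prop :=
  ∀ (P Q : Type) [AddCommGroup P] [Module Tᵐᵒᵖ P] [AddCommGroup Q] [Module Tᵐᵒᵖ Q]
    (i : P →ₗ[Tᵐᵒᵖ] Q), IsPureMonoRight T i →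
      ∀ g : P →ₗ[Tᵐᵒᵖ] N, ∃ h : Q →ₗ[Tᵐᵒᵖ] N, h.comp i = g

end Tensor

section Stmt0

variable (R S : Type) [Ring R] [Ring S]
variable (F : Type) [AddCommGroup F] [Module Rᵐᵒᵖ F]
variable (Y : Type) [AddCommGroup Y] [Module R Y] [Module Sᵐᵒᵖ Y] [SMulCommClass R Sᵐᵒᵖ Y]
variable (N : Type) [AddCommGroup N] [Module Sᵐᵒᵖ N]

/-- The defining relations of `F ⊗_R Y`, as an `Sᵐᵒᵖ`-submodule of `Y ⊗_ℤ F`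
(where `S` acts through `Y`). -/
def bimodRel : Submodule Sᵐᵒᵖ (TensorProduct ℤ Y F) :=
  Submodule.span Sᵐᵒᵖ {x | ∃ (r : R) (y : Y) (f : F),
    x = (r • y) ⊗ₜ[ℤ] f - y ⊗ₜ[ℤ] (MulOpposite.op r • f)}

/-- The tensor product `F ⊗_R Y`, a right `S`-module. -/
def BimodTens : Type := TensorProduct ℤ Y F ⧸ bimodRel R S F Y

instance : AddCommGroup (BimodTens R S F Y) :=
  inferInstanceAs (AddCommGroup (TensorProduct ℤ Y F ⧸ bimodRel R S F Y))

instance : Module Sᵐᵒᵖ (BimodTens R S F Y) :=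
  inferInstanceAs (Module Sᵐᵒᵖ (TensorProduct ℤ Y F ⧸ bimodRel R S F Y))

/-- The Ext-group `Ext^j_S(X, Z)` of right `S`-modules, as an abelian group. -/
def extGrp (T : Type) [Ring T] (X Z : ModuleCat.{0} T) (j : ℕ) : ModuleCat.{0} ℤ :=
  ((_root_.Ext ℤ (ModuleCat.{0} T) j).obj (op X)).obj Z

/-- Left multiplication by `r : R` on the bimodule `Y`, as a map of right `S`-modules. -/
def rmulY (r : R) : Y →ₗ[Sᵐᵒᵖ] Y where
  toFun y := r • y
  map_add' := smul_add r
  map_smul' s y := smul_comm r s y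

/-- The right `R`-action on `Ext^j_S(Y, N)` induced by the left `R`-action on `Y`:
`r` acts via the map induced by `y ↦ r • y`. -/
def extAct (j : ℕ) (r : R) :
    ↥(extGrp Sᵐᵒᵖ (ModuleCat.of Sᵐᵒᵖ Y) (ModuleCat.of Sᵐᵒᵖ N) j) →+
      ↥(extGrp Sᵐᵒᵖ (ModuleCat.of Sᵐᵒᵖ Y) (ModuleCat.of Sᵐᵒᵖ N) j) :=
  AddMonoidHom.mk'
    (fun e => (((_root_.Ext ℤ (ModuleCat.{0} Sᵐᵒᵖ) j).map
      (ModuleCat.ofHom (rmulY R S Y r)).op).app (ModuleCat.of Sᵐᵒᵖ N)) e)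
    (fun a b => LinearMap.map_add (((_root_.Ext ℤ (ModuleCat.{0} Sᵐᵒᵖ) j).map
      (ModuleCat.ofHom (rmulY R S Y r)).op).app (ModuleCat.of Sᵐᵒᵖ N)).hom a b)

/-- The group `Hom_R(F, Ext^j_S(Y, N))` of maps of right `R`-modules, realized as the
subgroup of additive maps `F →+ Ext^j_S(Y, N)` compatible with the `R`-actions. -/
def homRExt (j : ℕ) :
    AddSubgroup (F →+ ↥(extGrp Sᵐᵒᵖ (ModuleCat.of Sᵐᵒᵖ Y) (ModuleCat.of Sᵐᵒᵖ N) j)) where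
  carrier := {g | ∀ (r : R) (f : F),
    g (MulOpposite.op r • f) = extAct R S Y N j r (g f)}
  add_mem' := by
    intro a b ha hb r f
    simp [ha r f, hb r f]
  zero_mem' := by
    intro r f
    simp
  neg_mem' := by
    intro a ha r f
    simp [ha r f]


theorem exists_equiv_of_ker {A B C : Type*} [AddCommGroup A] [AddCommGroup B] [AddCommGroup C]
    (q : A →+ B) (p : A →+ C) (hq : Function.Surjective q) (hp : Function.Surjective p)
    (h : ∀ a, q a = 0 ↔ p a = 0) : ∃ e : B ≃+ C, ∀ a, e (q a) = p a := by
  have hk : q.ker = p.ker := by ext a; exact h a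
  refine ⟨(QuotientAddGroup.quotientKerEquivOfSurjective q hq).symm.trans
    ((QuotientAddGroup.quotientAddEquivOfEq hk).trans
      (QuotientAddGroup.quotientKerEquivOfSurjective p hp)), fun a => ?_⟩
  have : (QuotientAddGroup.quotientKerEquivOfSurjective q hq).symm (q a) =
      QuotientAddGroup.mk' _ a := by
    rw [AddEquiv.symm_apply_eq]; rfl
  simp only [AddEquiv.trans_apply, this]
  rfl

open CategoryTheory.Limits in
theorem extMk_zero_eq_zero {T : Type} [Ring T] {X Z : ModuleCat.{0} T}
    (P : ProjectiveResolution X) (f : P.complex.X 0 ⟶ Z) (hf : P.complex.d 1 0 ≫ f = 0)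
    (h : P.extMk f 1 rfl hf = 0) : f = 0 := by
  simp only [← P.extEquivCohomologyClass.apply_eq_iff_eq,
    ProjectiveResolution.extEquivCohomologyClass_extMk,
    ProjectiveResolution.extEquivCohomologyClass_zero,
    CochainComplex.HomComplex.CohomologyClass.mk_eq_zero_iff] at h
  rw [CochainComplex.HomComplex.Cocycle.toSingleMk_mem_coboundaries_iff _ _ _ _ _ 1 (by lia)] at h
  obtain ⟨g, hg⟩ := h
  have hz : IsZero (P.cochainComplex.X 1) :=
    P.cochainComplex.isZero_of_isStrictlyLE 0 1 (by lia)
  rw [hz.eq_of_src g 0, comp_zero] at hg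
  rw [← cancel_epi (P.cochainComplexXIso (-(0:ℕ)) 0 rfl).hom]
  simpa using hg.symm

section StepA
variable {T : Type} [Ring T] (Z : ModuleCat.{0} T) (j : ℕ)

def yonC (X : ModuleCat.{0} T) : ChainComplex (ModuleCat.{0} ℤ)ᵒᵖ ℕ :=
  (((linearYoneda ℤ (ModuleCat.{0} T)).obj Z).rightOp.mapHomologicalComplex _).obj
    (projectiveResolution X).complex

def cyc (X : ModuleCat.{0} T) : ModuleCat.{0} ℤ := ((yonC Z X).opcycles j).unop

def cycI (X : ModuleCat.{0} T) :
    cyc Z j X ⟶ ModuleCat.of ℤ ((projectiveResolution X).complex.X j ⟶ Z) :=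
  ((yonC Z X).pOpcycles j).unop

def ldIso (X : ModuleCat.{0} T) :
    (((linearYoneda ℤ (ModuleCat.{0} T)).obj Z).rightOp.leftDerived j).obj X ≅
      (yonC Z X).homology j :=
  (projectiveResolution X).isoLeftDerivedObj
      ((linearYoneda ℤ (ModuleCat.{0} T)).obj Z).rightOp j

def cycQ (X : ModuleCat.{0} T) : cyc Z j X ⟶ extGrp T X Z j :=
  ((yonC Z X).homologyι j).unop ≫
    ((projectiveResolution X).isoLeftDerivedObj
      ((linearYoneda ℤ (ModuleCat.{0} T)).obj Z).rightOp j).hom.unop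

theorem cycI_inj (X : ModuleCat.{0} T) : Function.Injective (cycI Z j X) := by
  rw [← ModuleCat.mono_iff_injective]
  exact unop_mono_of_epi ((yonC Z X).pOpcycles j)

theorem cycI_range (X : ModuleCat.{0} T) (x : (projectiveResolution X).complex.X j ⟶ Z) :
    (∃ c, cycI Z j X c = x) ↔ (projectiveResolution X).complex.d (j+1) j ≫ x = 0 := by
  have h := (ShortComplex.exact_of_g_is_cokernel
    (ShortComplex.mk _ _ ((yonC Z X).d_pOpcycles (j+1) j))
    ((yonC Z X).opcyclesIsCokernel (j+1) j (by simp))).unop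
  constructor
  · rintro ⟨c, rfl⟩
    have h0 := congrArg (fun f => f.hom c) (ShortComplex.zero (ShortComplex.mk _ _ ((yonC Z X).d_pOpcycles (j+1) j)).unop)
    exact h0
  · intro hx
    rw [ShortComplex.moduleCat_exact_iff] at h
    exact h x hx

theorem cycQ_surj (X : ModuleCat.{0} T) : Function.Surjective (cycQ Z j X) := by
  rw [← ModuleCat.epi_iff_surjective]
  have h1 : Epi ((yonC Z X).homologyι j).unop := unop_epi_of_mono _
  have h2 : Epi ((projectiveResolution X).isoLeftDerivedObj
      ((linearYoneda ℤ (ModuleCat.{0} T)).obj Z).rightOp j).hom.unop := inferInstance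
  exact epi_comp' h1 h2

theorem cycQ_eq_zero (X : ModuleCat.{0} T) (c : cyc Z j X) :
    cycQ Z j X c = 0 ↔ ((yonC Z X).homologyι j).unop c = 0 := by
  have h2 : Mono ((projectiveResolution X).isoLeftDerivedObj
      ((linearYoneda ℤ (ModuleCat.{0} T)).obj Z).rightOp j).hom.unop := inferInstance
  rw [ModuleCat.mono_iff_injective] at h2
  constructor
  · intro h
    exact h2 (h.trans (LinearMap.map_zero (ModuleCat.Hom.hom ((projectiveResolution X).isoLeftDerivedObj
      ((linearYoneda ℤ (ModuleCat.{0} T)).obj Z).rightOp j).hom.unop)).symm)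
  · intro h
    exact (congrArg (ModuleCat.Hom.hom ((projectiveResolution X).isoLeftDerivedObj
      ((linearYoneda ℤ (ModuleCat.{0} T)).obj Z).rightOp j).hom.unop) h).trans
      (LinearMap.map_zero _)

theorem cycQ_ker_succ (X : ModuleCat.{0} T) (c : cyc Z (j+1) X) :
    cycQ Z (j+1) X c = 0 ↔ ∃ g : (projectiveResolution X).complex.X j ⟶ Z,
      (projectiveResolution X).complex.d (j+1) j ≫ g = cycI Z (j+1) X c := by
  have h := (ShortComplex.exact_of_f_is_kernel
    (ShortComplex.mk _ _ ((yonC Z X).homologyι_comp_fromOpcycles (j+1) j))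
    ((yonC Z X).homologyIsKernel (j+1) j (by simp))).unop
  have hp : ∀ g : (projectiveResolution X).complex.X j ⟶ Z,
      cycI Z (j+1) X (((yonC Z X).fromOpcycles (j+1) j).unop g) =
      (projectiveResolution X).complex.d (j+1) j ≫ g := fun g =>
    congrArg (fun f => f.unop.hom g) ((yonC Z X).p_fromOpcycles (j+1) j)
  rw [cycQ_eq_zero]
  constructor
  · intro hx
    rw [ShortComplex.moduleCat_exact_iff] at h
    obtain ⟨g, hg⟩ := h c hx
    refine ⟨g, ?_⟩
    exact (hp g).symm.trans (congrArg (cycI Z (j+1) X) hg)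
  · rintro ⟨g, hg⟩
    rw [← hp] at hg
    rw [← cycI_inj Z (j+1) X hg]
    exact congrArg (fun f => f.unop.hom g) ((yonC Z X).homologyι_comp_fromOpcycles (j+1) j)

theorem cycQ_ker_zero (X : ModuleCat.{0} T) (c : cyc Z 0 X) :
    cycQ Z 0 X c = 0 ↔ cycI Z 0 X c = 0 := by
  rw [cycQ_eq_zero, map_eq_zero_iff _ (cycI_inj Z 0 X)]
  have : IsIso ((yonC Z X).homologyι 0) := 
    ShortComplex.isIso_homologyι _ ((yonC Z X).shape _ _ (by simp))
  have h2 : Mono ((yonC Z X).homologyι 0).unop := inferInstance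
  rw [ModuleCat.mono_iff_injective] at h2
  exact map_eq_zero_iff _ h2

def cycE (X : ModuleCat.{0} T) : cyc Z j X →+ Abelian.Ext X Z j :=
  AddMonoidHom.mk' (fun c => (projectiveResolution X).extMk (cycI Z j X c) (j+1) rfl
    ((cycI_range Z j X _).1 ⟨c, rfl⟩)) (by
    intro a b
    rw [ProjectiveResolution.add_extMk]
    congr 1
    exact map_add _ _ _)

theorem cycE_surj (X : ModuleCat.{0} T) : Function.Surjective (cycE Z j X) := by
  intro e
  obtain ⟨f, hf, rfl⟩ := (projectiveResolution X).extMk_surjective e (j+1) rfl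
  obtain ⟨c, rfl⟩ := (cycI_range Z j X f).2 hf
  exact ⟨c, rfl⟩

theorem cycE_ker (X : ModuleCat.{0} T) (c : cyc Z j X) : cycQ Z j X c = 0 ↔ cycE Z j X c = 0 := by
  cases j with
  | zero =>
    rw [cycQ_ker_zero]
    constructor
    · intro h
      have : c = 0 := cycI_inj Z 0 X (h.trans (LinearMap.map_zero (cycI Z 0 X).hom).symm)
      rw [this, map_zero]
    · intro h
      exact extMk_zero_eq_zero _ _ ((cycI_range Z 0 X _).1 ⟨c, rfl⟩) h
  | succ j =>
    rw [cycQ_ker_succ]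
    exact ((projectiveResolution X).extMk_eq_zero_iff (cycI Z (j+1) X c) (j+1+1) rfl
      ((cycI_range Z (j+1) X _).1 ⟨c, rfl⟩) j rfl).symm

theorem cyc_nat {X X' : ModuleCat.{0} T} (f : X ⟶ X')
    (φ : ProjectiveResolution.Hom (projectiveResolution X) (projectiveResolution X') f)
    (c : cyc Z j X') :
    ∃ c' : cyc Z j X, cycI Z j X c' = φ.hom.f j ≫ cycI Z j X' c ∧
      cycQ Z j X c' = ((_root_.Ext ℤ (ModuleCat.{0} T) j).map f.op).app Z (cycQ Z j X' c) := by
  let m : yonC Z X ⟶ yonC Z X' :=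
    (((linearYoneda ℤ (ModuleCat.{0} T)).obj Z).rightOp.mapHomologicalComplex _).map φ.hom
  refine ⟨(HomologicalComplex.opcyclesMap m j).unop c, ?_, ?_⟩
  · exact congrArg (fun f => f.unop.hom c) (HomologicalComplex.p_opcyclesMap m j)
  · have h1 := HomologicalComplex.homologyι_naturality m j
    have h2 := ProjectiveResolution.isoLeftDerivedObj_hom_naturality f _ _ φ.hom
      φ.hom_f_zero_comp_π_f_zero ((linearYoneda ℤ (ModuleCat.{0} T)).obj Z).rightOp j
    have h2' : (((linearYoneda ℤ (ModuleCat.{0} T)).obj Z).rightOp.leftDerived j).map f ≫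
        (ldIso Z j X').hom = (ldIso Z j X).hom ≫ HomologicalComplex.homologyMap m j := h2
    have h3 : (ldIso Z j X).hom ≫ (yonC Z X).homologyι j ≫ HomologicalComplex.opcyclesMap m j =
        (((linearYoneda ℤ (ModuleCat.{0} T)).obj Z).rightOp.leftDerived j).map f ≫
          (ldIso Z j X').hom ≫ (yonC Z X').homologyι j := by
      rw [← h1, reassoc_of% h2']
    exact congrArg (fun f => f.unop.hom c) h3

theorem stepA : ∃ θ : ∀ X : ModuleCat.{0} T, extGrp T X Z j ≃+ Abelian.Ext X Z j,
    ∀ (X X' : ModuleCat.{0} T) (f : X ⟶ X') (e : extGrp T X' Z j),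
      θ X (((_root_.Ext ℤ (ModuleCat.{0} T) j).map f.op).app Z e) =
        (Abelian.Ext.mk₀ f).comp (θ X' e) (zero_add j) := by
  choose θ hθ using fun X => exists_equiv_of_ker (cycQ Z j X).hom.toAddMonoidHom (cycE Z j X)
    (cycQ_surj Z j X) (cycE_surj Z j X) (cycE_ker Z j X)
  refine ⟨θ, fun X X' f e => ?_⟩
  obtain ⟨c, rfl⟩ := cycQ_surj Z j X' e
  let φ : ProjectiveResolution.Hom (projectiveResolution X) (projectiveResolution X') f :=
    { hom := ProjectiveResolution.lift f _ _
      hom_f_zero_comp_π_f_zero := by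
        rw [← HomologicalComplex.comp_f, ← HomologicalComplex.comp_f,
          ProjectiveResolution.lift_commutes] }
  obtain ⟨c', h1, h2⟩ := cyc_nat Z j f φ c
  rw [← h2]
  refine (hθ X c').trans ?_
  refine Eq.trans ?_ (congrArg (fun e => (Abelian.Ext.mk₀ f).comp e (zero_add j)) (hθ X' c).symm)
  refine Eq.trans ?_ (ProjectiveResolution.mk₀_comp_extMk (cycI Z j X' c) (j+1) rfl
    ((cycI_range Z j X' _).1 ⟨c, rfl⟩) φ).symm
  change (projectiveResolution X).extMk (cycI Z j X c') (j+1) rfl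
    ((cycI_range Z j X _).1 ⟨c', rfl⟩) = _
  simp only [h1]

end StepA

section StepB

open Abelian

/-- The map `y ↦ f ⊗ y`. -/
def iotaF (f : F) : ModuleCat.of Sᵐᵒᵖ Y ⟶ ModuleCat.of Sᵐᵒᵖ (BimodTens R S F Y) :=
  ModuleCat.ofHom
    { toFun := fun y => Submodule.Quotient.mk (p := bimodRel R S F Y) (y ⊗ₜ[ℤ] f)
      map_add' := fun a b => by rw [TensorProduct.add_tmul]; rfl
      map_smul' := fun s a => by rw [← TensorProduct.smul_tmul']; rfl }

theorem iotaF_add (f f' : F) : iotaF R S F Y (f + f') = iotaF R S F Y f + iotaF R S F Y f' := by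
  ext y
  change Submodule.Quotient.mk (p := bimodRel R S F Y) (y ⊗ₜ[ℤ] (f + f')) = _
  rw [TensorProduct.tmul_add]
  rfl

theorem iotaF_smul (r : R) (f : F) : iotaF R S F Y (MulOpposite.op r • f) =
    ModuleCat.ofHom (rmulY R S Y r) ≫ iotaF R S F Y f := by
  ext y
  change Submodule.Quotient.mk (p := bimodRel R S F Y) (y ⊗ₜ[ℤ] (MulOpposite.op r • f)) =
    Submodule.Quotient.mk (p := bimodRel R S F Y) ((r • y) ⊗ₜ[ℤ] f)
  symm
  rw [Submodule.Quotient.eq]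
  exact Submodule.subset_span ⟨r, y, f, rfl⟩

/-- `R`-compatibility of an additive map `F → Ext^j(Y, N)`. -/
def IsCompat {N : ModuleCat.{0} Sᵐᵒᵖ} {j : ℕ} (g : F →+ Ext (ModuleCat.of Sᵐᵒᵖ Y) N j) : Prop :=
  ∀ (r : R) (f : F), g (MulOpposite.op r • f) =
    (Ext.mk₀ (ModuleCat.ofHom (rmulY R S Y r))).comp (g f) (zero_add j)

/-- The canonical map. -/
def phi (N : ModuleCat.{0} Sᵐᵒᵖ) (j : ℕ) (e : Ext (ModuleCat.of Sᵐᵒᵖ (BimodTens R S F Y)) N j) :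
    F →+ Ext (ModuleCat.of Sᵐᵒᵖ Y) N j :=
  AddMonoidHom.mk' (fun f => (Ext.mk₀ (iotaF R S F Y f)).comp e (zero_add j)) (fun a b => by
    rw [iotaF_add, Ext.mk₀_add, Ext.add_comp])

theorem phi_apply (N : ModuleCat.{0} Sᵐᵒᵖ) (j : ℕ)
    (e : Ext (ModuleCat.of Sᵐᵒᵖ (BimodTens R S F Y)) N j) (f : F) :
    phi R S F Y N j e f = (Ext.mk₀ (iotaF R S F Y f)).comp e (zero_add j) := rfl

theorem phi_compat (N : ModuleCat.{0} Sᵐᵒᵖ) (j : ℕ)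
    (e : Ext (ModuleCat.of Sᵐᵒᵖ (BimodTens R S F Y)) N j) :
    IsCompat R S F Y (phi R S F Y N j e) := by
  intro r f
  rw [phi_apply, phi_apply, iotaF_smul, Ext.mk₀_comp_mk₀_assoc]

theorem phi_add (N : ModuleCat.{0} Sᵐᵒᵖ) (j : ℕ)
    (e e' : Ext (ModuleCat.of Sᵐᵒᵖ (BimodTens R S F Y)) N j) :
    phi R S F Y N j (e + e') = phi R S F Y N j e + phi R S F Y N j e' := by
  ext f
  simp [phi_apply]

/-- The canonical map is bijective. -/
def Good (N : ModuleCat.{0} Sᵐᵒᵖ) (j : ℕ) : Prop :=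
  (∀ e, phi R S F Y N j e = 0 → e = 0) ∧
    ∀ g, IsCompat R S F Y (N := N) (j := j) g → ∃ e, phi R S F Y N j e = g

theorem phi_comp {N N' : ModuleCat.{0} Sᵐᵒᵖ} {j k l : ℕ} (hjk : j + k = l)
    (e : Ext (ModuleCat.of Sᵐᵒᵖ (BimodTens R S F Y)) N j) (x : Ext N N' k) (f : F) :
    phi R S F Y N' l (e.comp x hjk) f = (phi R S F Y N j e f).comp x hjk := by
  rw [phi_apply, phi_apply, Ext.comp_assoc _ _ _ _ _ (by lia)]

/-- Postcomposition of compatible maps. -/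
def postc {N N' : ModuleCat.{0} Sᵐᵒᵖ} {j k l : ℕ} (hjk : j + k = l)
    (g : F →+ Ext (ModuleCat.of Sᵐᵒᵖ Y) N j) (x : Ext N N' k) :
    F →+ Ext (ModuleCat.of Sᵐᵒᵖ Y) N' l := (x.postcomp _ hjk).comp g

theorem postc_apply {N N' : ModuleCat.{0} Sᵐᵒᵖ} {j k l : ℕ} (hjk : j + k = l)
    (g : F →+ Ext (ModuleCat.of Sᵐᵒᵖ Y) N j) (x : Ext N N' k) (f : F) :
    postc S F Y hjk g x f = (g f).comp x hjk := rfl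

theorem postc_compat {N N' : ModuleCat.{0} Sᵐᵒᵖ} {j k l : ℕ} (hjk : j + k = l)
    (g : F →+ Ext (ModuleCat.of Sᵐᵒᵖ Y) N j) (x : Ext N N' k) (hg : IsCompat R S F Y g) :
    IsCompat R S F Y (postc S F Y hjk g x) := by
  intro r f
  rw [postc_apply, postc_apply, hg, Ext.comp_assoc _ _ _ _ _ (by lia)]

theorem good_retract {N N' : ModuleCat.{0} Sᵐᵒᵖ} (i : N ⟶ N') (p : N' ⟶ N) (hip : i ≫ p = 𝟙 N)
    (j : ℕ) (h : Good R S F Y N' j) : Good R S F Y N j := by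
  have key : ∀ {X : ModuleCat.{0} Sᵐᵒᵖ} (e : Ext X N j),
      (e.comp (Ext.mk₀ i) (add_zero j)).comp (Ext.mk₀ p) (add_zero j) = e := by
    intro X e
    rw [Ext.comp_assoc_of_third_deg_zero, Ext.mk₀_comp_mk₀, hip, Ext.comp_mk₀_id]
  constructor
  · intro e he
    rw [← key e, h.1 (e.comp (Ext.mk₀ i) (add_zero j)), Ext.zero_comp]
    ext f
    rw [phi_comp, he]
    simp
  · intro g hg
    obtain ⟨e, he⟩ := h.2 _ (postc_compat R S F Y (add_zero j) g (Ext.mk₀ i) hg)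
    refine ⟨e.comp (Ext.mk₀ p) (add_zero j), ?_⟩
    ext f
    rw [phi_comp, he, postc_apply, key]

theorem good_zero (N : ModuleCat.{0} Sᵐᵒᵖ) : Good R S F Y N 0 := by
  constructor
  · intro e he
    obtain ⟨e, rfl⟩ := (Ext.mk₀_bijective _ _).2 e
    have h : ∀ f, iotaF R S F Y f ≫ e = 0 := by
      intro f
      rw [← Ext.mk₀_eq_zero_iff, ← Ext.mk₀_comp_mk₀, ← phi_apply, he]
      rfl
    rw [Ext.mk₀_eq_zero_iff]
    ext x
    obtain ⟨x, rfl⟩ := Submodule.Quotient.mk_surjective _ x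
    induction x using TensorProduct.induction_on with
    | zero => exact map_zero e.hom
    | tmul y f => exact congrArg (fun u => u.hom y) (h f)
    | add a b ha hb =>
      refine (LinearMap.map_add e.hom
        (Submodule.Quotient.mk (p := bimodRel R S F Y) a : BimodTens R S F Y)
        (Submodule.Quotient.mk (p := bimodRel R S F Y) b : BimodTens R S F Y)).trans ?_
      refine (congrArg₂ (· + ·) ha hb).trans ?_
      exact add_zero _
  · intro g hg
    let G : F →+ (ModuleCat.of Sᵐᵒᵖ Y ⟶ N) := (Ext.addEquiv₀ : Ext (ModuleCat.of Sᵐᵒᵖ Y) N 0 ≃+ _).toAddMonoidHom.comp g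
    have hG : ∀ f, Ext.mk₀ (G f) = g f := fun f => Ext.mk₀_addEquiv₀_apply _
    have hGr : ∀ (r : R) (f : F) (y : Y), (G (MulOpposite.op r • f)).hom y = (G f).hom (r • y) := by
      intro r f y
      have : G (MulOpposite.op r • f) = ModuleCat.ofHom (rmulY R S Y r) ≫ G f := by
        apply (Ext.mk₀_bijective _ _).1
        rw [hG, ← Ext.mk₀_comp_mk₀, hG]
        exact hg r f
      rw [this]
      rfl
    let B : Y →+ F →+ N := AddMonoidHom.mk' (fun y => AddMonoidHom.mk' (fun f => (G f).hom y)
      (fun a b => by rw [map_add]; rfl)) (fun a b => by ext f; exact map_add (G f).hom a b)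
    let L : TensorProduct ℤ Y F →+ N := TensorProduct.liftAddHom B (by
      intro r m n
      simp)
    have hLt : ∀ y f, L (y ⊗ₜ f) = (G f).hom y := fun y f => rfl
    let L' : TensorProduct ℤ Y F →ₗ[Sᵐᵒᵖ] N :=
      { toFun := L
        map_add' := map_add L
        map_smul' := by
          intro s x
          induction x using TensorProduct.induction_on with
          | zero => simp
          | tmul y f =>
            rw [TensorProduct.smul_tmul', hLt, hLt]
            exact map_smul (G f).hom s y
          | add a b ha hb => 
            rw [smul_add, map_add, ha, hb, map_add, smul_add] }
    have hker : bimodRel R S F Y ≤ LinearMap.ker L' := by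
      unfold bimodRel
      rw [Submodule.span_le]
      rintro _ ⟨r, y, f, rfl⟩
      change L' _ = 0
      rw [map_sub]
      change (G f).hom (r • y) - (G (MulOpposite.op r • f)).hom y = 0
      rw [hGr, sub_self]
    let E : ModuleCat.of Sᵐᵒᵖ (BimodTens R S F Y) ⟶ N :=
      ModuleCat.ofHom ((bimodRel R S F Y).liftQ L' hker)
    refine ⟨Ext.mk₀ E, ?_⟩
    ext f
    rw [phi_apply, Ext.mk₀_comp_mk₀, ← hG]
    congr 1

theorem good_succ {C : ShortComplex (ModuleCat.{0} Sᵐᵒᵖ)} (hC : C.ShortExact) [Injective C.X₂]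
    (j : ℕ) (hK : Good R S F Y C.X₃ j) (hI : Good R S F Y C.X₂ j)
    (L1 : ∀ g, IsCompat R S F Y (N := C.X₁) (j := j + 1) g →
      ∃ g', IsCompat R S F Y (N := C.X₃) (j := j) g' ∧ postc S F Y rfl g' hC.extClass = g)
    (L2 : ∀ g, IsCompat R S F Y (N := C.X₃) (j := j) g → postc S F Y rfl g hC.extClass = 0 →
      ∃ g', IsCompat R S F Y (N := C.X₂) (j := j) g' ∧
        postc S F Y (add_zero j) g' (Ext.mk₀ C.g) = g) :
    Good R S F Y C.X₁ (j + 1) := by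
  constructor
  · intro e he
    obtain ⟨e', rfl⟩ := Ext.covariant_sequence_exact₁ _ hC e (Ext.eq_zero_of_injective _) rfl
    obtain ⟨g', hg', h2⟩ := L2 (phi R S F Y _ _ e') (phi_compat R S F Y _ _ e') (by
      ext f
      rw [postc_apply, ← phi_comp, he])
    obtain ⟨e'', rfl⟩ := hI.2 g' hg'
    have : e' - e''.comp (Ext.mk₀ C.g) (add_zero j) = 0 := by
      apply hK.1
      ext f
      have h3 := DFunLike.congr_fun h2 f
      rw [postc_apply, ← phi_comp] at h3
      rw [phi_apply, sub_eq_add_neg, Ext.comp_add, Ext.comp_neg, ← phi_apply, ← phi_apply, h3,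
        add_neg_cancel]
      rfl
    rw [sub_eq_zero.1 this, Ext.comp_assoc_of_second_deg_zero, hC.comp_extClass, Ext.comp_zero]
  · intro g hg
    obtain ⟨g', hg', rfl⟩ := L1 g hg
    obtain ⟨e, rfl⟩ := hK.2 g' hg'
    refine ⟨e.comp hC.extClass rfl, ?_⟩
    ext f
    rw [phi_comp, postc_apply]

theorem good_inj (I : ModuleCat.{0} Sᵐᵒᵖ) [Injective I] (j : ℕ) : Good R S F Y I j := by
  cases j with
  | zero => exact good_zero R S F Y I
  | succ j =>
    refine ⟨fun e _ => Ext.eq_zero_of_injective e, fun g _ => ⟨0, ?_⟩⟩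
    ext f
    rw [Ext.eq_zero_of_injective (g f), Ext.eq_zero_of_injective (phi _ _ _ _ _ _ _ f)]

theorem good_succ_succ {C : ShortComplex (ModuleCat.{0} Sᵐᵒᵖ)} (hC : C.ShortExact) [Injective C.X₂]
    (j : ℕ) (hK : Good R S F Y C.X₃ (j + 1)) : Good R S F Y C.X₁ (j + 1 + 1) := by
  let X := ModuleCat.of Sᵐᵒᵖ Y
  have inj : ∀ x : Ext X C.X₃ (j+1), x.comp hC.extClass rfl = 0 → x = 0 := by
    intro x hx
    obtain ⟨y, rfl⟩ := Ext.covariant_sequence_exact₃ _ hC x rfl hx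
    rw [Ext.eq_zero_of_injective y, Ext.zero_comp]
  let D : Ext X C.X₃ (j+1) ≃+ Ext X C.X₁ (j+1+1) :=
    AddEquiv.ofBijective (hC.extClass.postcomp X rfl) ⟨by
      rw [injective_iff_map_eq_zero]
      exact inj, fun e => Ext.covariant_sequence_exact₁ _ hC e (Ext.eq_zero_of_injective _) rfl⟩
  have hD : ∀ x, D x = x.comp hC.extClass rfl := fun x => rfl
  apply good_succ R S F Y hC (j+1) hK (good_inj R S F Y _ _)
  · intro g hg
    refine ⟨D.symm.toAddMonoidHom.comp g, ?_, ?_⟩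
    · intro r f
      apply D.injective
      rw [hD (Ext.comp _ _ _), Ext.comp_assoc _ _ _ _ (rfl : j + 1 + 1 = j + 1 + 1) (by lia), ← hD]
      simp only [AddMonoidHom.comp_apply, AddEquiv.coe_toAddMonoidHom, D.apply_symm_apply]
      exact hg r f
    · ext f
      rw [postc_apply, ← hD]
      simp
  · intro g hg h0
    refine ⟨0, fun r f => by simp, ?_⟩
    ext f
    rw [inj (g f) (DFunLike.congr_fun h0 f), postc_apply]
    simp

end StepB

section StepC

open Abelian

/-- The character group `ℚ/ℤ`. -/
abbrev QZ : Type := AddCircle (1 : ℚ)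

theorem char_ext_inj {A B : Type} [AddCommGroup A] [AddCommGroup B] (i : A →+ B)
    (hi : Function.Injective i) (χ : A →+ QZ) : ∃ χ' : B →+ QZ, ∀ a, χ' (i a) = χ a := by
  obtain ⟨χ', h⟩ := CharacterModule.dual_surjective_of_injective i.toIntLinearMap hi χ
  exact ⟨χ', fun a => DFunLike.congr_fun h a⟩

theorem char_ext {A B : Type} [AddCommGroup A] [AddCommGroup B] (u : A →+ B) (χ : A →+ QZ)
    (h : ∀ a, u a = 0 → χ a = 0) : ∃ χ' : B →+ QZ, ∀ a, χ' (u a) = χ a := by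
  obtain ⟨χ', h'⟩ := char_ext_inj (QuotientAddGroup.kerLift u)
    (QuotientAddGroup.kerLift_injective u) (QuotientAddGroup.lift u.ker χ h)
  exact ⟨χ', fun a => h' (QuotientAddGroup.mk a)⟩

theorem char_sep {A : Type} [AddCommGroup A] (a : A) (h : ∀ χ : A →+ QZ, χ a = 0) : a = 0 :=
  CharacterModule.eq_zero_of_character_apply h

section Bal

variable (T : Type) [Ring T] (P : Type) [AddCommGroup P] [Module Tᵐᵒᵖ P]
    (A : Type) [AddCommGroup A] [Module T A]

/-- Pure tensors in `P ⊗_T A`. -/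
def balMk : A →+ P →+ Bal T P A :=
  AddMonoidHom.mk' (fun a => AddMonoidHom.mk'
    (fun p => Submodule.Quotient.mk (p := balRel T P A) (a ⊗ₜ[ℤ] p))
    (fun p q => by rw [TensorProduct.tmul_add]; rfl))
    (fun a b => by
      ext p
      change Submodule.Quotient.mk (p := balRel T P A) ((a + b) ⊗ₜ[ℤ] p) = _
      rw [TensorProduct.add_tmul]; rfl)

theorem balMk_smul (t : T) (a : A) (p : P) :
    balMk T P A (t • a) p = balMk T P A a (MulOpposite.op t • p) := by
  change Submodule.Quotient.mk (p := balRel T P A) _ =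
    Submodule.Quotient.mk (p := balRel T P A) _
  rw [Submodule.Quotient.eq]
  exact Submodule.subset_span ⟨t, a, p, rfl⟩

theorem bal_hom_ext {X : Type} [AddCommGroup X] (χ χ' : Bal T P A →+ X)
    (h : ∀ a p, χ (balMk T P A a p) = χ' (balMk T P A a p)) : χ = χ' := by
  ext x
  obtain ⟨x, rfl⟩ := Submodule.Quotient.mk_surjective (balRel T P A) x
  induction x using TensorProduct.induction_on with
  | zero => exact (map_zero χ).trans (map_zero χ').symm
  | tmul y f => exact h y f
  | add a b ha hb =>
    exact (map_add χ (Submodule.Quotient.mk (p := balRel T P A) a : Bal T P A)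
        (Submodule.Quotient.mk (p := balRel T P A) b : Bal T P A)).trans
      ((congrArg₂ (· + ·) ha hb).trans
      (map_add χ' (Submodule.Quotient.mk (p := balRel T P A) a : Bal T P A)
        (Submodule.Quotient.mk (p := balRel T P A) b : Bal T P A)).symm)

theorem bal_lift {X : Type} [AddCommGroup X] (B : A →+ P →+ X)
    (h : ∀ (t : T) a p, B (t • a) p = B a (MulOpposite.op t • p)) :
    ∃ χ : Bal T P A →+ X, ∀ a p, χ (balMk T P A a p) = B a p := by
  let L : TensorProduct ℤ A P →+ X := TensorProduct.liftAddHom B (by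
      intro r m n
      simp)
  have hker : balRel T P A ≤ LinearMap.ker L.toIntLinearMap := by
    unfold balRel
    rw [Submodule.span_le]
    rintro _ ⟨r, y, f, rfl⟩
    change L.toIntLinearMap _ = 0
    rw [map_sub]
    change B (r • y) f - B y (MulOpposite.op r • f) = 0
    rw [h, sub_self]
  exact ⟨((balRel T P A).liftQ L.toIntLinearMap hker).toAddMonoidHom, fun a p => rfl⟩

end Bal

section Flat

variable {R F}

theorem flat_lift_inj (hF : RightFlat R F) {A B : Type} [AddCommGroup A] [Module R A]
    [AddCommGroup B] [Module R B] (u : A →ₗ[R] B) (hu : Function.Injective u)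
    (g : F →+ A →+ QZ) (hg : ∀ (r : R) f a, g (MulOpposite.op r • f) a = g f (r • a)) :
    ∃ g' : F →+ B →+ QZ, (∀ (r : R) f b, g' (MulOpposite.op r • f) b = g' f (r • b)) ∧
      ∀ f a, g' f (u a) = g f a := by
  obtain ⟨χ, hχ⟩ := bal_lift R F A g.flip (fun t a p => (hg t p a).symm)
  obtain ⟨χ', hχ'⟩ := char_ext_inj (balMapLeft R F u).toAddMonoidHom (hF A B u hu) χ
  refine ⟨(AddMonoidHom.compHom χ').comp (balMk R F B).flip, ?_, ?_⟩
  · intro r f b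
    exact congrArg χ' (balMk_smul R F B r b f).symm
  · intro f a
    exact (hχ' (balMk R F A a f)).trans (hχ a f)

theorem flat_lift (hF : RightFlat R F) {A B : Type} [AddCommGroup A] [Module R A]
    [AddCommGroup B] [Module R B] (u : A →ₗ[R] B)
    (g : F →+ A →+ QZ) (hg : ∀ (r : R) f a, g (MulOpposite.op r • f) a = g f (r • a))
    (hk : ∀ f a, u a = 0 → g f a = 0) :
    ∃ g' : F →+ B →+ QZ, (∀ (r : R) f b, g' (MulOpposite.op r • f) b = g' f (r • b)) ∧
      ∀ f a, g' f (u a) = g f a := by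
  let g1 : F →+ (A ⧸ LinearMap.ker u) →+ QZ :=
    AddMonoidHom.mk' (fun f =>
      QuotientAddGroup.lift (LinearMap.ker u).toAddSubgroup (g f) (fun a ha => hk f a ha))
      (fun f f' => by
        ext x
        obtain ⟨x, rfl⟩ := Submodule.Quotient.mk_surjective _ x
        exact DFunLike.congr_fun (map_add g f f') x)
  have h1 : ∀ f a, g1 f (Submodule.Quotient.mk a) = g f a := fun f a => rfl
  obtain ⟨g', h2, h3⟩ := flat_lift_inj hF ((LinearMap.ker u).liftQ u le_rfl)
    (LinearMap.ker_eq_bot.1 (Submodule.ker_liftQ_eq_bot _ _ _ le_rfl)) g1 (by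
      intro r f a
      obtain ⟨a, rfl⟩ := Submodule.Quotient.mk_surjective _ a
      rw [← Submodule.Quotient.mk_smul, h1, h1, hg])
  exact ⟨g', h2, fun f a => h3 f (Submodule.Quotient.mk a)⟩

theorem flat_lift_quot (hF : RightFlat R F) {A B : Type} [AddCommGroup A] [Module R A]
    [AddCommGroup B] [Module R B] (u : A →ₗ[R] B) {E : Type} [AddCommGroup E]
    (act : R → E → E) (δ : (A →+ QZ) →+ E) (hδ : Function.Surjective δ)
    (hker : ∀ χ, δ χ = 0 ↔ ∀ a, u a = 0 → χ a = 0)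
    (heq : ∀ (r : R) χ, δ (χ.comp (DistribSMul.toAddMonoidHom A r)) = act r (δ χ))
    (g : F →+ E) (hg : ∀ (r : R) f, g (MulOpposite.op r • f) = act r (g f)) :
    ∃ g' : F →+ A →+ QZ, (∀ (r : R) f b, g' (MulOpposite.op r • f) b = g' f (r • b)) ∧
      ∀ f, δ (g' f) = g f := by
  choose h hh using fun f => hδ (g f)
  have key : ∀ χ χ', δ χ = δ χ' → ∀ a, u a = 0 → χ a = χ' a := by
    intro χ χ' h a ha
    have := (hker (χ - χ')).1 (by rw [map_sub, h, sub_self]) a ha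
    exact sub_eq_zero.1 this
  let g1 : F →+ (LinearMap.ker u) →+ QZ :=
    AddMonoidHom.mk' (fun f => (h f).comp (LinearMap.ker u).subtype.toAddMonoidHom)
      (fun f f' => by
        ext x
        refine key (h (f + f')) (h f + h f') ?_ x x.2
        rw [map_add, hh, hh, hh, map_add])
  obtain ⟨g', h2, h3⟩ := flat_lift_inj hF (LinearMap.ker u).subtype
    (Submodule.subtype_injective _) g1 (by
      intro r f a
      refine key (h (MulOpposite.op r • f)) ((h f).comp (DistribSMul.toAddMonoidHom A r)) ?_ a a.2
      rw [heq, hh, hh, hg])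
  refine ⟨g', h2, fun f => ?_⟩
  rw [← hh f, ← sub_eq_zero, ← map_sub, hker]
  intro a ha
  exact sub_eq_zero.2 (h3 f ⟨a, ha⟩)

end Flat

section Duals

/-- The character module of a left module, a right module. -/
def DualL (M : Type) [AddCommGroup M] [Module S M] : Type := M →+ QZ

instance (M : Type) [AddCommGroup M] [Module S M] : AddCommGroup (DualL S M) :=
  inferInstanceAs (AddCommGroup (M →+ QZ))

instance (M : Type) [AddCommGroup M] [Module S M] : Module Sᵐᵒᵖ (DualL S M) where
  smul s χ := AddMonoidHom.comp (show M →+ QZ from χ) (DistribSMul.toAddMonoidHom M s.unop)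
  one_smul χ := AddMonoidHom.ext fun m => congrArg (show M →+ QZ from χ) (one_smul S m)
  mul_smul a b χ := AddMonoidHom.ext fun m =>
    congrArg (show M →+ QZ from χ) (mul_smul b.unop a.unop m)
  smul_zero a := AddMonoidHom.ext fun m => rfl
  smul_add a χ χ' := AddMonoidHom.ext fun m => rfl
  add_smul a b χ := AddMonoidHom.ext fun m =>
    (congrArg (show M →+ QZ from χ) (add_smul a.unop b.unop m)).trans
      (map_add (show M →+ QZ from χ) _ _)
  zero_smul χ := AddMonoidHom.ext fun m =>
    (congrArg (show M →+ QZ from χ) (zero_smul S m)).trans (map_zero (show M →+ QZ from χ))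

/-- The character module of a right module, a left module. -/
def DualR (M : Type) [AddCommGroup M] [Module Sᵐᵒᵖ M] : Type := M →+ QZ

instance (M : Type) [AddCommGroup M] [Module Sᵐᵒᵖ M] : AddCommGroup (DualR S M) :=
  inferInstanceAs (AddCommGroup (M →+ QZ))

instance (M : Type) [AddCommGroup M] [Module Sᵐᵒᵖ M] : Module S (DualR S M) where
  smul s χ := AddMonoidHom.comp (show M →+ QZ from χ)
    (DistribSMul.toAddMonoidHom M (MulOpposite.op s))
  one_smul χ := AddMonoidHom.ext fun m => congrArg (show M →+ QZ from χ) (one_smul Sᵐᵒᵖ m)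
  mul_smul a b χ := AddMonoidHom.ext fun m =>
    congrArg (show M →+ QZ from χ) (mul_smul (MulOpposite.op b) (MulOpposite.op a) m)
  smul_zero a := AddMonoidHom.ext fun m => rfl
  smul_add a χ χ' := AddMonoidHom.ext fun m => rfl
  add_smul a b χ := AddMonoidHom.ext fun m =>
    (congrArg (show M →+ QZ from χ) (add_smul (MulOpposite.op a) (MulOpposite.op b) m)).trans
      (map_add (show M →+ QZ from χ) _ _)
  zero_smul χ := AddMonoidHom.ext fun m =>
    (congrArg (show M →+ QZ from χ) (zero_smul Sᵐᵒᵖ m)).trans (map_zero (show M →+ QZ from χ))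

/-- Evaluation into the double dual. -/
def evDD : N →ₗ[Sᵐᵒᵖ] DualL S (DualR S N) where
  toFun n := (AddMonoidHom.eval n : (N →+ QZ) →+ QZ)
  map_add' n n' := AddMonoidHom.ext fun (φ : N →+ QZ) => map_add φ n n'
  map_smul' s n := AddMonoidHom.ext fun (φ : N →+ QZ) => rfl

theorem evDD_pure : IsPureMonoRight S (evDD S N) := by
  constructor
  · rw [injective_iff_map_eq_zero]
    intro n hn
    exact char_sep n fun χ => DFunLike.congr_fun (show (AddMonoidHom.eval n : (N →+ QZ) →+ QZ) = 0 from hn) χ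
  · intro A _ _
    rw [injective_iff_map_eq_zero]
    intro x hx
    apply char_sep
    intro χ
    let h : A →+ (N →+ QZ) := (AddMonoidHom.compHom χ).comp (balMk S N A)
    let B : A →+ (DualL S (DualR S N)) →+ QZ :=
      (AddMonoidHom.eval (M := N →+ QZ) (N := QZ)).comp h
    obtain ⟨ψ, hψ⟩ := bal_lift S (DualL S (DualR S N)) A B (by
      intro t a p
      change (show (N →+ QZ) →+ QZ from p) (h (t • a)) = (show (N →+ QZ) →+ QZ from p)
        ((h a).comp (DistribSMul.toAddMonoidHom N (MulOpposite.op t)))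
      congr 1
      ext n
      exact congrArg χ (balMk_smul S N A t a n))
    have : ψ.comp (balMapRight S A (evDD S N)).toAddMonoidHom = χ := by
      apply bal_hom_ext
      intro a p
      exact hψ a (evDD S N p)
    rw [← this]
    exact (congrArg ψ hx).trans (map_zero ψ)

variable {S} in
/-- Functoriality of the character module. -/
def dualMap {M M' : Type} [AddCommGroup M] [Module S M] [AddCommGroup M'] [Module S M']
    (u : M →ₗ[S] M') : DualL S M' →ₗ[Sᵐᵒᵖ] DualL S M where
  toFun χ := AddMonoidHom.comp (show M' →+ QZ from χ) u.toAddMonoidHom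
  map_add' _ _ := rfl
  map_smul' s χ := AddMonoidHom.ext fun m =>
    congrArg (show M' →+ QZ from χ) (map_smul u s.unop m).symm

theorem dualFree_injective (M : Type) : Injective (ModuleCat.of Sᵐᵒᵖ (DualL S (M →₀ S))) := by
  constructor
  intro X X' g f hf
  have hf' := (ModuleCat.mono_iff_injective f).1 hf
  let χ : M → X →+ QZ := fun m => AddMonoidHom.mk' (fun x =>
    (show (M →₀ S) →+ QZ from g.hom x) (Finsupp.single m 1)) (fun x x' => by
      rw [map_add]; rfl)
  choose χ' hχ' using fun m => char_ext_inj f.hom.toAddMonoidHom hf' (χ m)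
  let h0 : X' → ((M →₀ S) →+ QZ) := fun x' => Finsupp.liftAddHom
    (fun m => (χ' m).comp (AddMonoidHom.mk' (fun s : S => MulOpposite.op s • x')
      (fun a b => add_smul (MulOpposite.op a) (MulOpposite.op b) x')))
  have h0s : ∀ x' m s, h0 x' (Finsupp.single m s) = χ' m (MulOpposite.op s • x') := by
    intro x' m s
    simp [h0]
  let h : X' →ₗ[Sᵐᵒᵖ] DualL S (M →₀ S) :=
    { toFun := h0
      map_add' := fun a b => by
        refine Finsupp.addHom_ext (f := h0 (a + b)) (g := h0 a + h0 b) fun m s => ?_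
        rw [AddMonoidHom.add_apply, h0s, h0s, h0s, smul_add, map_add]
      map_smul' := fun t a => by
        refine Finsupp.addHom_ext (f := h0 (t • a)) (g := (h0 a).comp (DistribSMul.toAddMonoidHom _ t.unop)) fun m s => ?_
        rw [AddMonoidHom.comp_apply, DistribSMul.toAddMonoidHom_apply, Finsupp.smul_single,
          h0s, h0s, smul_smul]
        rfl }
  refine ⟨ModuleCat.ofHom h, ?_⟩
  ext x
  refine Finsupp.addHom_ext (f := h0 (f.hom x)) (g := (g.hom x)) fun m s => ?_
  rw [h0s, ← map_smul]
  refine (hχ' m _).trans ?_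
  change (show (M →₀ S) →+ QZ from g.hom (MulOpposite.op s • x)) (Finsupp.single m 1) = _
  rw [map_smul]
  change (show (M →₀ S) →+ QZ from g.hom x) (s • Finsupp.single m 1) = _
  rw [Finsupp.smul_single, smul_eq_mul, mul_one]

variable {S} in
/-- The dual of a short exact sequence. -/
def dualSC {K Q M : Type} [AddCommGroup K] [Module S K] [AddCommGroup Q] [Module S Q]
    [AddCommGroup M] [Module S M] (i : K →ₗ[S] Q) (p : Q →ₗ[S] M) (hip : ∀ k, p (i k) = 0) :
    ShortComplex (ModuleCat.{0} Sᵐᵒᵖ) :=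
  ShortComplex.mk (ModuleCat.ofHom (dualMap p)) (ModuleCat.ofHom (dualMap i)) (by
    ext χ
    refine AddMonoidHom.ext fun k => ?_
    exact (congrArg (show M →+ QZ from χ) (hip k)).trans (map_zero (show M →+ QZ from χ)))

variable {S} in
theorem dualSC_shortExact {K Q M : Type} [AddCommGroup K] [Module S K] [AddCommGroup Q]
    [Module S Q] [AddCommGroup M] [Module S M] (i : K →ₗ[S] Q) (p : Q →ₗ[S] M)
    (hip : ∀ k, p (i k) = 0) (hi : Function.Injective i) (hp : Function.Surjective p)
    (hex : ∀ q, p q = 0 → ∃ k, i k = q) : (dualSC i p hip).ShortExact := by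
  have h1 : Mono (dualSC i p hip).f := by
    rw [ModuleCat.mono_iff_injective]
    intro χ χ' h
    refine AddMonoidHom.ext fun m => ?_
    obtain ⟨q, rfl⟩ := hp m
    exact DFunLike.congr_fun (F := Q →+ QZ) h q
  have h2 : Epi (dualSC i p hip).g := by
    rw [ModuleCat.epi_iff_surjective]
    intro χ
    obtain ⟨χ', h⟩ := char_ext_inj i.toAddMonoidHom hi χ
    exact ⟨χ', AddMonoidHom.ext h⟩
  refine ⟨?_⟩
  rw [ShortComplex.moduleCat_exact_iff]
  intro χ hχ
  obtain ⟨χ', h⟩ := char_ext p.toAddMonoidHom χ (by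
    intro q hq
    obtain ⟨k, rfl⟩ := hex q hq
    exact DFunLike.congr_fun (F := K →+ QZ) hχ k)
  exact ⟨χ', AddMonoidHom.ext h⟩

end Duals

end StepC

section StepD

open Abelian

section TT

variable (K : Type) [AddCommGroup K] [Module S K]

/-- Relations of `Y ⊗_S K`, as an `R`-submodule. -/
def ttRel : Submodule R (TensorProduct ℤ Y K) :=
  Submodule.span R {x | ∃ (t : S) (y : Y) (k : K),
    x = (MulOpposite.op t • y) ⊗ₜ[ℤ] k - y ⊗ₜ[ℤ] (t • k)}

/-- The left `R`-module `Y ⊗_S K`. -/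
abbrev TT : Type := TensorProduct ℤ Y K ⧸ ttRel R S Y K

/-- Pure tensors. -/
abbrev ttMk (y : Y) (k : K) : TT R S Y K := Submodule.Quotient.mk (p := ttRel R S Y K) (y ⊗ₜ[ℤ] k)

theorem ttMk_smul (t : S) (y : Y) (k : K) :
    ttMk R S Y K (MulOpposite.op t • y) k = ttMk R S Y K y (t • k) := by
  rw [Submodule.Quotient.eq]
  exact Submodule.subset_span ⟨t, y, k, rfl⟩

theorem tt_hom_ext {X : Type} [AddCommGroup X] (χ χ' : TT R S Y K →+ X)
    (h : ∀ y k, χ (ttMk R S Y K y k) = χ' (ttMk R S Y K y k)) : χ = χ' := by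
  ext x
  obtain ⟨x, rfl⟩ := Submodule.Quotient.mk_surjective (ttRel R S Y K) x
  induction x using TensorProduct.induction_on with
  | zero => exact (map_zero χ).trans (map_zero χ').symm
  | tmul y f => exact h y f
  | add a b ha hb => rw [Submodule.Quotient.mk_add, map_add, map_add, ha, hb]

/-- A character of `Y ⊗_S K` gives a map `Y → K^*`. -/
def ofChar : (TT R S Y K →+ QZ) →+ (ModuleCat.of Sᵐᵒᵖ Y ⟶ ModuleCat.of Sᵐᵒᵖ (DualL S K)) :=
  AddMonoidHom.mk' (fun χ => ModuleCat.ofHom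
    { toFun := fun y => (AddMonoidHom.mk' (fun k => χ (ttMk R S Y K y k)) (fun k k' => by
        rw [ttMk, TensorProduct.tmul_add, Submodule.Quotient.mk_add, map_add]) : K →+ QZ)
      map_add' := fun y y' => AddMonoidHom.ext fun k => by
        change χ (ttMk R S Y K (y + y') k) = χ (ttMk R S Y K y k) + χ (ttMk R S Y K y' k)
        rw [ttMk, TensorProduct.add_tmul, Submodule.Quotient.mk_add, map_add]
      map_smul' := fun s y => AddMonoidHom.ext fun k => 
        congrArg χ (ttMk_smul R S Y K s.unop y k) })
    (fun χ χ' => rfl)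

theorem ofChar_apply (χ : TT R S Y K →+ QZ) (y : Y) (k : K) :
    (show K →+ QZ from (ofChar R S Y K χ).hom y) k = χ (ttMk R S Y K y k) := rfl

theorem ofChar_bij : Function.Bijective (ofChar R S Y K) := by
  constructor
  · intro χ χ' h
    apply tt_hom_ext
    intro y k
    rw [← ofChar_apply, h, ofChar_apply]
  · intro h
    let B : Y →+ K →+ QZ := AddMonoidHom.mk' (fun y => (h.hom y : K →+ QZ))
      (fun y y' => map_add h.hom y y')
    let L : TensorProduct ℤ Y K →+ QZ := TensorProduct.liftAddHom B (by
      intro r m n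
      simp)
    have hL0 : ∀ x ∈ ttRel R S Y K, ∀ r : R, L (r • x) = 0 := by
      intro x hx
      unfold ttRel at hx
      induction hx using Submodule.span_induction with
      | mem x hx =>
        intro r
        obtain ⟨t, y, k, rfl⟩ := hx
        simp only [smul_sub, TensorProduct.smul_tmul', map_sub]
        rw [smul_comm]
        refine sub_eq_zero.2 ?_
        exact DFunLike.congr_fun (F := K →+ QZ) (map_smul h.hom (MulOpposite.op t) (r • y)) k
      | zero => intro r; rw [smul_zero, map_zero]
      | add a b _ _ ha hb => intro r; rw [smul_add, map_add, ha, hb, add_zero]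
      | smul a x _ ha => intro r; rw [smul_smul, ha]
    have hL : ∀ x ∈ ttRel R S Y K, L x = 0 := fun x hx => by
      rw [← one_smul R x]
      exact hL0 x hx 1
    refine ⟨QuotientAddGroup.lift (ttRel R S Y K).toAddSubgroup L hL, ?_⟩
    ext y
    rfl

/-- Characters of `Y ⊗_S K` are `Ext^0(Y, K^*)`. -/
def omegaE : (TT R S Y K →+ QZ) ≃+ Ext (ModuleCat.of Sᵐᵒᵖ Y) (ModuleCat.of Sᵐᵒᵖ (DualL S K)) 0 :=
  (AddEquiv.ofBijective (ofChar R S Y K) (ofChar_bij R S Y K)).trans Ext.addEquiv₀.symm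

theorem omegaE_apply (χ : TT R S Y K →+ QZ) :
    omegaE R S Y K χ = Ext.mk₀ (ofChar R S Y K χ) := rfl

theorem omegaE_smul (r : R) (χ : TT R S Y K →+ QZ) :
    omegaE R S Y K (χ.comp (DistribSMul.toAddMonoidHom _ r)) =
      (Ext.mk₀ (ModuleCat.ofHom (rmulY R S Y r))).comp (omegaE R S Y K χ) (zero_add 0) := by
  rw [omegaE_apply, omegaE_apply, Ext.mk₀_comp_mk₀]
  rfl

variable {K} {Q : Type} [AddCommGroup Q] [Module S Q]

/-- Functoriality of `Y ⊗_S -`. -/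
def ttMap (i : K →ₗ[S] Q) : TT R S Y K →ₗ[R] TT R S Y Q :=
  Submodule.mapQ (ttRel R S Y K) (ttRel R S Y Q)
    (TensorProduct.AlgebraTensorModule.map (A := R) (LinearMap.id : Y →ₗ[R] Y)
      i.toAddMonoidHom.toIntLinearMap) (by
      rw [ttRel, Submodule.span_le]
      rintro x ⟨t, a, p, rfl⟩
      change (TensorProduct.AlgebraTensorModule.map _ _) _ ∈ ttRel R S Y Q
      rw [map_sub]
      refine Submodule.subset_span ⟨t, a, i p, ?_⟩
      simp)

theorem ttMap_mk (i : K →ₗ[S] Q) (y : Y) (k : K) :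
    ttMap R S Y i (ttMk R S Y K y k) = ttMk R S Y Q y (i k) := rfl

theorem omegaE_map (i : K →ₗ[S] Q) (χ : TT R S Y Q →+ QZ) :
    omegaE R S Y K (χ.comp (ttMap R S Y i).toAddMonoidHom) =
      (omegaE R S Y Q χ).comp (Ext.mk₀ (ModuleCat.ofHom (dualMap i))) (add_zero 0) := by
  rw [omegaE_apply, omegaE_apply, Ext.mk₀_comp_mk₀]
  rfl

end TT

theorem good_one (hF : RightFlat R F) {K Q M : Type} [AddCommGroup K] [Module S K]
    [AddCommGroup Q] [Module S Q] [AddCommGroup M] [Module S M] (i : K →ₗ[S] Q) (p : Q →ₗ[S] M)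
    (hip : ∀ k, p (i k) = 0) (hC : (dualSC i p hip).ShortExact)
    [hI : Injective (ModuleCat.of Sᵐᵒᵖ (DualL S Q))] :
    Good R S F Y (ModuleCat.of Sᵐᵒᵖ (DualL S M)) 1 := by
  haveI : Injective (dualSC i p hip).X₂ := hI
  have hker : ∀ χ : TT R S Y K →+ QZ, (omegaE R S Y K χ).comp hC.extClass (zero_add 1) = 0 ↔
      ∀ a, ttMap R S Y i a = 0 → χ a = 0 := by
    intro χ
    constructor
    · intro h a ha
      obtain ⟨z, hz⟩ := Ext.covariant_sequence_exact₃ _ hC (omegaE R S Y K χ) rfl h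
      obtain ⟨ψ, rfl⟩ := (omegaE R S Y Q).surjective z
      have h2 := (omegaE_map R S Y i ψ).trans hz
      rw [← (omegaE R S Y K).injective h2]
      exact (congrArg ψ ha).trans (map_zero ψ)
    · intro h
      obtain ⟨ψ, hψ⟩ := char_ext (ttMap R S Y i).toAddMonoidHom χ h
      have h2 : χ = ψ.comp (ttMap R S Y i).toAddMonoidHom := AddMonoidHom.ext fun a => (hψ a).symm
      rw [h2, omegaE_map]
      refine (Ext.comp_assoc_of_second_deg_zero _ _ _ _).trans ?_
      exact (congrArg (fun t => Ext.comp _ t _) hC.comp_extClass).trans (Ext.comp_zero _ _ _ _ _)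
  have hcomp : ∀ g' : F →+ TT R S Y K →+ QZ, 
      (∀ (r : R) f b, g' (MulOpposite.op r • f) b = g' f (r • b)) →
      IsCompat R S F Y ((omegaE R S Y K).toAddMonoidHom.comp g') := by
    intro g' h r f
    refine Eq.trans ?_ (omegaE_smul R S Y K r (g' f))
    exact congrArg (omegaE R S Y K) (AddMonoidHom.ext fun b => h r f b)
  have hcompQ : ∀ g' : F →+ TT R S Y Q →+ QZ, 
      (∀ (r : R) f b, g' (MulOpposite.op r • f) b = g' f (r • b)) →
      IsCompat R S F Y ((omegaE R S Y Q).toAddMonoidHom.comp g') := by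
    intro g' h r f
    refine Eq.trans ?_ (omegaE_smul R S Y Q r (g' f))
    exact congrArg (omegaE R S Y Q) (AddMonoidHom.ext fun b => h r f b)
  refine good_succ R S F Y hC 0 (good_zero R S F Y _) (good_zero R S F Y _) ?_ ?_
  · intro g hg
    obtain ⟨g', h1, h2⟩ := flat_lift_quot hF (ttMap R S Y i)
      (fun r e => (Ext.mk₀ (ModuleCat.ofHom (rmulY R S Y r))).comp e (zero_add 1))
      ((hC.extClass.postcomp (ModuleCat.of Sᵐᵒᵖ Y) (zero_add 1)).comp
        (omegaE R S Y K).toAddMonoidHom) (by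
          intro e
          obtain ⟨x, hx⟩ := Ext.covariant_sequence_exact₁ _ hC e (Ext.eq_zero_of_injective _) rfl
          obtain ⟨ψ, rfl⟩ := (omegaE R S Y K).surjective x
          exact ⟨ψ, hx⟩) hker (by
          intro r χ
          change (omegaE R S Y K _).comp hC.extClass (zero_add 1) = _
          rw [omegaE_smul]
          exact Ext.comp_assoc _ _ _ _ (zero_add 1) (by lia)) g hg
    exact ⟨_, hcomp g' h1, AddMonoidHom.ext h2⟩
  · intro g hg h0
    obtain ⟨G, hG⟩ : ∃ G : F →+ TT R S Y K →+ QZ, ∀ f, omegaE R S Y K (G f) = g f :=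
      ⟨(omegaE R S Y K).symm.toAddMonoidHom.comp g, fun f => (omegaE R S Y K).apply_symm_apply _⟩
    obtain ⟨g', h1, h2⟩ := flat_lift hF (ttMap R S Y i) G (by
      intro r f a
      have : G (MulOpposite.op r • f) = (G f).comp (DistribSMul.toAddMonoidHom _ r) := by
        apply (omegaE R S Y K).injective
        rw [omegaE_smul, hG, hG]
        exact hg r f
      rw [this]
      rfl) (by
      intro f
      rw [← hker, hG]
      exact DFunLike.congr_fun h0 f)
    refine ⟨_, hcompQ g' h1, ?_⟩
    refine AddMonoidHom.ext fun f => ?_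
    refine (omegaE_map R S Y i (g' f)).symm.trans ?_
    rw [← hG]
    exact congrArg _ (AddMonoidHom.ext (h2 f))

theorem exists_presentation (M : Type) [AddCommGroup M] [Module S M] :
    ∃ (K : Type) (_ : AddCommGroup K) (_ : Module S K) (i : K →ₗ[S] (M →₀ S))
      (p : (M →₀ S) →ₗ[S] M), Function.Injective i ∧ Function.Surjective p ∧
      (∀ k, p (i k) = 0) ∧ ∀ q, p q = 0 → ∃ k, i k = q :=
  ⟨LinearMap.ker (Finsupp.linearCombination S (id : M → M)), inferInstance, inferInstance,
    Submodule.subtype _, Finsupp.linearCombination S (id : M → M),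
    Submodule.subtype_injective _, Finsupp.linearCombination_id_surjective S M,
    fun k => k.2, fun q hq => ⟨⟨q, hq⟩, rfl⟩⟩

theorem good_dual (hF : RightFlat R F) (j : ℕ) : ∀ (M : Type) [AddCommGroup M] [Module S M],
    Good R S F Y (ModuleCat.of Sᵐᵒᵖ (DualL S M)) j := by
  induction j with
  | zero => intro M _ _; exact good_zero R S F Y _
  | succ j ih =>
    intro M _ _
    obtain ⟨K, _, _, i, p, hi, hp, hip, hex⟩ := exists_presentation S M
    have hC : (dualSC i p hip).ShortExact := dualSC_shortExact i p hip hi hp hex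
    haveI hI := dualFree_injective S M
    haveI : Injective (dualSC i p hip).X₂ := hI
    cases j with
    | zero => exact good_one R S F Y hF i p _ hC
    | succ j => exact good_succ_succ R S F Y hC j (ih K)

theorem good_main (hF : RightFlat R F) (hN : PureInjectiveRight S N) (j : ℕ) :
    Good R S F Y (ModuleCat.of Sᵐᵒᵖ N) j := by
  obtain ⟨q, hq⟩ := hN N (DualL S (DualR S N)) (evDD S N) (evDD_pure S N) LinearMap.id
  refine good_retract R S F Y (ModuleCat.ofHom (evDD S N)) (ModuleCat.ofHom q) ?_ j
    (good_dual R S F Y hF j (DualR S N))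
  rw [← ModuleCat.ofHom_comp, hq]
  rfl

end StepD

/-- if `F` is a flat right `R`-module, `Y` an `(R,S)`-bimodule and `N` a
pure-injective right `S`-module, then for every `j ≥ 0` there is an isomorphism of
abelian groups `Ext^j_S(F ⊗_R Y, N) ≅ Hom_R(F, Ext^j_S(Y, N))`. -/
theorem stmt0 (hF : RightFlat R F) (hN : PureInjectiveRight S N) (j : ℕ) :
    Nonempty
      (↥(extGrp Sᵐᵒᵖ (ModuleCat.of Sᵐᵒᵖ (BimodTens R S F Y)) (ModuleCat.of Sᵐᵒᵖ N) j) ≃+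
        ↥(homRExt R S F Y N j)) := by
  obtain ⟨θ, hθ⟩ := stepA (ModuleCat.of Sᵐᵒᵖ N) j
  obtain ⟨h1, h2⟩ := good_main R S F Y N hF hN j
  let Z := ModuleCat.of Sᵐᵒᵖ N
  let X := ModuleCat.of Sᵐᵒᵖ Y
  let W := ModuleCat.of Sᵐᵒᵖ (BimodTens R S F Y)
  have hact : ∀ (r : R) (e : extGrp Sᵐᵒᵖ X Z j), θ X (extAct R S Y N j r e) =
      (Abelian.Ext.mk₀ (ModuleCat.ofHom (rmulY R S Y r))).comp (θ X e) (zero_add j) :=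
    fun r e => hθ X X (ModuleCat.ofHom (rmulY R S Y r)) e
  let m : extGrp Sᵐᵒᵖ W Z j →+ homRExt R S F Y N j :=
    AddMonoidHom.mk' (fun e => ⟨(θ X).symm.toAddMonoidHom.comp (phi R S F Y Z j (θ W e)), by
      intro r f
      apply (θ X).injective
      refine ((θ X).apply_symm_apply _).trans ?_
      rw [hact]
      refine (phi_compat R S F Y Z j (θ W e) r f).trans ?_
      exact congrArg (fun t => (Abelian.Ext.mk₀ (ModuleCat.ofHom (rmulY R S Y r))).comp t
        (zero_add j)) ((θ X).apply_symm_apply _).symm⟩) (fun e e' => by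
      apply Subtype.ext
      ext f
      change (θ X).symm (phi R S F Y Z j (θ W (e + e')) f) =
        (θ X).symm (phi R S F Y Z j (θ W e) f) + (θ X).symm (phi R S F Y Z j (θ W e') f)
      rw [map_add, phi_add, ← map_add]
      rfl)
  have hm : ∀ e f, θ X ((m e).1 f) = phi R S F Y Z j (θ W e) f :=
    fun e f => (θ X).apply_symm_apply _
  refine ⟨AddEquiv.ofBijective m ⟨?_, ?_⟩⟩
  · rw [injective_iff_map_eq_zero]
    intro e he
    have : θ W e = 0 := by
      apply h1
      ext f
      rw [← hm, he]
      exact map_zero (θ X)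
    exact (θ W).injective (this.trans (map_zero (θ W)).symm)
  · intro g
    obtain ⟨e, he⟩ := h2 ((θ X).toAddMonoidHom.comp g.1) (by
      intro r f
      refine (congrArg (θ X) (g.2 r f)).trans ?_
      exact hact r (g.1 f))
    refine ⟨(θ W).symm e, ?_⟩
    apply Subtype.ext
    ext f
    apply (θ X).injective
    rw [hm]
    have : θ W ((θ W).symm e) = e := (θ W).apply_symm_apply e
    rw [this]
    exact DFunLike.congr_fun he f

end Stmt0
end
end

section
/- Let R be a commutative noetherian ring, p a prime ideal, and k an integer with 0 < k ≤ depth(R_p). Then: (1) the Koszul cocycle module S_k(pR_p; R_p) has flat dimension exactly k as an R-module and projective dimension exactly k as an R_p-module; (2) its character dual S_k(pR_p; R_p)^+ = Hom_ℤ(S_k(pR_p; R_p), ℚ/ℤ) and its Matlis dual Hom_{R_p}(S_k(pR_p; R_p), E(R_p/pR_p)) are both pure-injective modules of injective dimension exactly k, and the Tor-orthogonal class {M : Tor^R_j(S_k(pR_p; R_p), M) = 0 for all j ≥ 1} coincides with {}^⊥(S_k(pR_p; R_p)^+) and with {}^⊥(Hom_{R_p}(S_k(pR_p; R_p), E(R_p/pR_p))).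 -/
open CategoryTheory Opposite

noncomputable section

/-- Vanishing of the `n`-th Ext group of two `R`-modules. -/
def extV (R : Type) [Ring R] (M N : ModuleCat.{0} R) (n : ℕ) : Prop :=
  Subsingleton (((_root_.Ext ℤ (ModuleCat.{0} R) n).obj (op M)).obj N)

/-- Vanishing of the `n`-th Tor group of two `R`-modules. -/
def torV (R : Type) [CommRing R] (M N : ModuleCat.{0} R) (n : ℕ) : Prop :=
  Subsingleton (((Tor (ModuleCat.{0} R) n).obj M).obj N)

/-- `f : A →ₗ[R] B` is a pure monomorphism. -/
def IsPureMono (R : Type) [CommRing R] {A B : Type} [AddCommGroup A] [Module R A]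
    [AddCommGroup B] [Module R B] (f : A →ₗ[R] B) : Prop :=
  Function.Injective f ∧
    ∀ (Q : Type) [AddCommGroup Q] [Module R Q], Function.Injective (LinearMap.lTensor Q f)

/-- An `R`-module `N` is pure-injective if it is injective with respect to
pure monomorphisms. -/
def PureInjective (R : Type) [CommRing R] (N : Type) [AddCommGroup N] [Module R N] : Prop :=
  ∀ (A B : Type) [AddCommGroup A] [Module R A] [AddCommGroup B] [Module R B]
    (f : A →ₗ[R] B), IsPureMono R f → ∀ g : A →ₗ[R] N, ∃ h : B →ₗ[R] N, h.comp f = g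

/-- `N` has injective dimension at most `n`. -/
def injDimLE (R : Type) [Ring R] (N : ModuleCat.{0} R) (n : ℕ) : Prop :=
  ∀ M : ModuleCat.{0} R, ∀ j : ℕ, n < j → extV R M N j

/-- `M` has projective dimension at most `n`. -/
def projDimLE (R : Type) [Ring R] (M : ModuleCat.{0} R) (n : ℕ) : Prop :=
  ∀ N : ModuleCat.{0} R, ∀ j : ℕ, n < j → extV R M N j

/-- `M` has flat dimension at most `n`. -/
def flatDimLE (R : Type) [CommRing R] (M : ModuleCat.{0} R) (n : ℕ) : Prop :=
  ∀ N : ModuleCat.{0} R, ∀ j : ℕ, n < j → torV R M N j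

/-- The depth of a module over a commutative local ring. -/
def rdepth (A : Type) [CommRing A] [IsLocalRing A] (M : Type) [AddCommGroup M]
    [Module A M] : ℕ∞ :=
  sInf {n : ℕ∞ | ∃ i : ℕ, n = (i : ℕ∞) ∧
    ¬ extV A (ModuleCat.of A (IsLocalRing.ResidueField A)) (ModuleCat.of A M) i}

/-- `depth(R_p)`. -/
def ringDepthAt (R : Type) [CommRing R] (p : PrimeSpectrum R) : ℕ∞ :=
  rdepth (Localization.AtPrime p.asIdeal) (Localization.AtPrime p.asIdeal)

/-- `depth_{R_p}(M_p)`. -/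
def depthAt (R : Type) [CommRing R] (p : PrimeSpectrum R) (M : Type) [AddCommGroup M]
    [Module R M] : ℕ∞ :=
  rdepth (Localization.AtPrime p.asIdeal) (LocalizedModule p.asIdeal.primeCompl M)

/-- `f : M →ₗ[R] E` exhibits `E` as an injective envelope of `M`. -/
def IsInjectiveEnvelope (R : Type) [Ring R] {M E : Type} [AddCommGroup M] [Module R M]
    [AddCommGroup E] [Module R E] (f : M →ₗ[R] E) : Prop :=
  Module.Injective R E ∧ Function.Injective f ∧
    ∀ K : Submodule R E, K ≠ ⊥ → K ⊓ LinearMap.range f ≠ ⊥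

/-- The degree-`i` term of the Koszul cochain complex on `ℓ` generators over `A`:
a free module on the `i`-element subsets of `Fin ℓ`. -/
abbrev KosTerm (A : Type) [CommRing A] (ℓ i : ℕ) : Type :=
  {s : Finset (Fin ℓ) // s.card = i} → A

/-- The Koszul cochain differential (for the sequence `x`), from degree `i`
to degree `i+1`. -/
def kosD (A : Type) [CommRing A] {ℓ : ℕ} (x : Fin ℓ → A) (i : ℕ) :
    KosTerm A ℓ i →ₗ[A] KosTerm A ℓ (i + 1) where
  toFun f T := ∑ t ∈ T.1.attach,
    ((-1 : A) ^ ((T.1.filter (fun s => s < t.1)).card) * x t.1) •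
      f ⟨T.1.erase t.1, by
        rw [Finset.card_erase_of_mem t.2, T.2]; omega⟩
  map_add' f g := by
    funext T
    simp [mul_add, Finset.sum_add_distrib]
  map_smul' a f := by
    funext T
    rw [RingHom.id_apply]
    simp only [Pi.smul_apply, smul_eq_mul, Finset.mul_sum]
    exact Finset.sum_congr rfl fun t _ => by ring

/-- `S_k(x; A)`: the cokernel of the `(k-1)`-st differential of the Koszul cochain
complex of the sequence `x` (with `S_0 = A`). -/
def KosCoker (A : Type) [CommRing A] {ℓ : ℕ} (x : Fin ℓ → A) : ℕ → Type
  | 0 => A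
  | m + 1 => KosTerm A ℓ (m + 1) ⧸ LinearMap.range (kosD A x m)

instance kosCokerAddCommGroup (A : Type) [CommRing A] {ℓ : ℕ} (x : Fin ℓ → A) :
    (k : ℕ) → AddCommGroup (KosCoker A x k)
  | 0 => inferInstanceAs (AddCommGroup A)
  | m + 1 => inferInstanceAs
      (AddCommGroup (KosTerm A ℓ (m + 1) ⧸ LinearMap.range (kosD A x m)))

instance kosCokerModule (A : Type) [CommRing A] {ℓ : ℕ} (x : Fin ℓ → A) :
    (k : ℕ) → Module A (KosCoker A x k)
  | 0 => inferInstanceAs (Module A A)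
  | m + 1 => inferInstanceAs
      (Module A (KosTerm A ℓ (m + 1) ⧸ LinearMap.range (kosD A x m)))

/-- The `R`-module structure on `S_k(x; A)` obtained by restriction of scalars. -/
instance kosCokerModule' (R A : Type) [CommRing R] [CommRing A] [Algebra R A]
    {ℓ : ℕ} (x : Fin ℓ → A) (k : ℕ) : Module R (KosCoker A x k) :=
  Module.compHom _ (algebraMap R A)

/-- Mathlib's `RestrictScalars.module` on `Hom_{R_p}(S_k(x; R_p), E)`, stated over the additive
group structure of `RestrictScalars`. -/
instance kosCokerHomModule (R : Type) [CommRing R] (p : PrimeSpectrum R) {ℓ : ℕ}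
    (x : Fin ℓ → Localization.AtPrime p.asIdeal) (k : ℕ) (E : Type) [AddCommGroup E]
    [Module (Localization.AtPrime p.asIdeal) E] :
    @Module R (RestrictScalars R (Localization.AtPrime p.asIdeal)
      ((KosCoker (Localization.AtPrime p.asIdeal) x k) →ₗ[Localization.AtPrime p.asIdeal] E))
      _ AddCommGroup.toAddCommMonoid :=
  (RestrictScalars.module R (Localization.AtPrime p.asIdeal) _ : Module R (RestrictScalars R (Localization.AtPrime p.asIdeal)
    ((KosCoker (Localization.AtPrime p.asIdeal) x k) →ₗ[Localization.AtPrime p.asIdeal] E)))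



lemma extV_iff_res (R : Type) [Ring R] (M N : ModuleCat.{0} R) (P : ProjectiveResolution M) (n : ℕ) :
    extV R M N n ↔ ∀ f : P.complex.X n ⟶ N, P.complex.d (n+1) n ≫ f = 0 →
      ∃ g : P.complex.X (n-1) ⟶ N, P.complex.d n (n-1) ≫ g = f := by
  unfold extV
  rw [← ModuleCat.isZero_iff_subsingleton, (P.isoExt (R := ℤ) n N).isZero_iff,
    ← HomologicalComplex.exactAt_iff_isZero_homology,
    HomologicalComplex.exactAt_iff' _ (n-1) n (n+1) (by cases n <;> simp) (by simp),
    ShortComplex.moduleCat_exact_iff]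
  rfl

lemma subExt_iff_res (R : Type) [Ring R] (M N : ModuleCat.{0} R) (P : ProjectiveResolution M) (n : ℕ) :
    Subsingleton (Abelian.Ext M N (n+1)) ↔ ∀ f : P.complex.X (n+1) ⟶ N, P.complex.d (n+2) (n+1) ≫ f = 0 →
      ∃ g : P.complex.X n ⟶ N, P.complex.d (n+1) n ≫ g = f := by
  constructor
  · intro h f hf
    exact (P.extMk_eq_zero_iff f (n+2) rfl hf n rfl).1 (Subsingleton.elim _ _)
  · intro h
    refine subsingleton_of_forall_eq 0 fun e => ?_
    obtain ⟨f, hf, rfl⟩ := P.extMk_surjective e (n+2) rfl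
    exact (P.extMk_eq_zero_iff f (n+2) rfl hf n rfl).2 (h f hf)

lemma extV_succ_iff (R : Type) [Ring R] (M N : ModuleCat.{0} R) (n : ℕ) :
    extV R M N (n+1) ↔ Subsingleton (Abelian.Ext M N (n+1)) := by
  rw [extV_iff_res R M N (projectiveResolution M), subExt_iff_res R M N (projectiveResolution M)]
  rfl

lemma extV_zero_iff (R : Type) [Ring R] (M N : ModuleCat.{0} R)  :
    extV R M N 0 ↔ ∀ f : M ⟶ N, f = 0 := by
  let P := projectiveResolution M
  rw [extV_iff_res R M N P]
  have hd : P.complex.d 0 0 = 0 := P.complex.shape _ _ (by simp)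
  constructor
  · intro h f
    obtain ⟨g, hg⟩ := h (P.π.f 0 ≫ f)
      ((P.complex_d_comp_π_f_zero_assoc _).trans Limits.zero_comp)
    have : P.π.f 0 ≫ f = 0 := by rw [← hg]; exact (congrArg (· ≫ g) hd).trans Limits.zero_comp
    exact (cancel_epi (P.π.f 0)).1 (this.trans Limits.comp_zero.symm)
  · intro h f hf
    refine ⟨0, ?_⟩
    have hex := P.exact₀
    let f' := hex.desc f hf
    have : f = P.π.f 0 ≫ f' := (hex.g_desc f hf).symm
    rw [this, h f']
    exact Limits.comp_zero.trans Limits.comp_zero.symm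

lemma extV_iff (R : Type) [Ring R] (M N : ModuleCat.{0} R) (n : ℕ) :
    extV R M N n ↔ Subsingleton (Abelian.Ext M N n) := by
  cases n with
  | succ n => exact extV_succ_iff R M N n
  | zero =>
    rw [extV_zero_iff, Abelian.Ext.homEquiv₀.subsingleton_congr]
    exact ⟨fun h => subsingleton_of_forall_eq 0 h, fun h f => Subsingleton.elim _ _⟩

lemma torV_iff_res (R : Type) [CommRing R] (S M : ModuleCat.{0} R) (P : ProjectiveResolution M) (n : ℕ) :
    torV R S M n ↔ Function.Exact (LinearMap.lTensor S (P.complex.d (n+1) n).hom)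
      (LinearMap.lTensor S (P.complex.d n (n-1)).hom) := by
  unfold torV
  dsimp only [Tor]
  rw [← ModuleCat.isZero_iff_subsingleton, (P.isoLeftDerivedObj _ n).isZero_iff]
  dsimp only [HomologicalComplex.homologyFunctor]
  rw [← HomologicalComplex.exactAt_iff_isZero_homology,
    HomologicalComplex.exactAt_iff' _ (n+1) n (n-1) (by simp) (by cases n <;> simp),
    ShortComplex.ShortExact.moduleCat_exact_iff_function_exact]
  rfl


/-- Functional duality between `S` and `N`. -/
def DualP (R : Type) [CommRing R] (S N : Type) [AddCommGroup S] [Module R S]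
    [AddCommGroup N] [Module R N] : Prop :=
  ∀ (X Y Z : Type) [AddCommGroup X] [Module R X] [AddCommGroup Y] [Module R Y]
    [AddCommGroup Z] [Module R Z] (f : X →ₗ[R] Y) (g : Y →ₗ[R] Z), g ∘ₗ f = 0 →
    (Function.Exact (LinearMap.lTensor S f) (LinearMap.lTensor S g) ↔
      ∀ φ : Y →ₗ[R] N, φ ∘ₗ f = 0 → ∃ ψ : Z →ₗ[R] N, ψ ∘ₗ g = φ)

lemma DualP.tor_iff {R : Type} [CommRing R] {S N : Type} [AddCommGroup S] [Module R S]
    [AddCommGroup N] [Module R N] (h : DualP R S N) (M : ModuleCat.{0} R) (n : ℕ) :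
    torV R (ModuleCat.of R S) M n ↔ extV R M (ModuleCat.of R N) n := by
  let P := projectiveResolution M
  rw [torV_iff_res R _ M P, extV_iff_res R M _ P]
  refine (h _ _ _ (P.complex.d (n+1) n).hom (P.complex.d n (n-1)).hom ?_).trans ?_
  · exact congrArg ModuleCat.Hom.hom (P.complex.d_comp_d (n+1) n (n-1))
  · constructor
    · intro H f hf
      obtain ⟨ψ, hψ⟩ := H f.hom (congrArg ModuleCat.Hom.hom hf)
      exact ⟨ModuleCat.ofHom ψ, ModuleCat.hom_ext hψ⟩
    · intro H f hf
      obtain ⟨ψ, hψ⟩ := H (ModuleCat.ofHom f) (ModuleCat.hom_ext hf)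
      exact ⟨ψ.hom, congrArg ModuleCat.Hom.hom hψ⟩

lemma DualP.pureInjective {R : Type} [CommRing R] {S N : Type} [AddCommGroup S] [Module R S]
    [AddCommGroup N] [Module R N] (h : DualP R S N) : PureInjective R N := by
  intro A B _ _ _ _ f hf g
  refine (h PUnit A B 0 f (by simp)).1 ?_ g (by simp)
  intro y
  constructor
  · intro hy
    exact ⟨0, by rw [map_zero]; exact ((injective_iff_map_eq_zero _).1 (hf.2 S) y hy).symm⟩
  · rintro ⟨z, rfl⟩
    simp

/-- Injective cogenerator. -/
def InjCogen (A : Type) [CommRing A] (E : Type) [AddCommGroup E] [Module A E] : Prop :=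
  Module.Injective A E ∧ ∀ (V : Type) [AddCommGroup V] [Module A V] (v : V), v ≠ 0 →
    ∃ c : V →ₗ[A] E, c v ≠ 0

lemma InjCogen.exact_iff {A : Type} [CommRing A] {E : Type} [AddCommGroup E] [Module A E]
    (h : InjCogen A E) {U V W : Type} [AddCommGroup U] [Module A U] [AddCommGroup V] [Module A V]
    [AddCommGroup W] [Module A W] (F : U →ₗ[A] V) (G : V →ₗ[A] W) (hGF : G ∘ₗ F = 0) :
    Function.Exact F G ↔ ∀ c : V →ₗ[A] E, c ∘ₗ F = 0 → ∃ c' : W →ₗ[A] E, c' ∘ₗ G = c := by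
  constructor
  · intro hex c hc
    have hker : LinearMap.ker G ≤ LinearMap.ker c := by
      intro v hv
      obtain ⟨u, rfl⟩ := (hex v).1 hv
      exact LinearMap.congr_fun hc u
    let i : (V ⧸ LinearMap.ker G) →ₗ[A] W := (LinearMap.ker G).liftQ G le_rfl
    have hi : Function.Injective i := by
      rw [← LinearMap.ker_eq_bot]
      exact Submodule.ker_liftQ_eq_bot _ _ _ le_rfl
    obtain ⟨c', hc'⟩ := h.1.out i hi ((LinearMap.ker G).liftQ c hker)
    refine ⟨c', LinearMap.ext fun v => ?_⟩
    exact hc' (Submodule.Quotient.mk v)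
  · intro H v
    constructor
    · intro hv
      by_contra hn
      have : (LinearMap.range F).mkQ v ≠ 0 := by
        simpa using hn
      obtain ⟨c, hc⟩ := h.2 _ _ this
      obtain ⟨c', hc'⟩ := H (c ∘ₗ (LinearMap.range F).mkQ) (by
        rw [LinearMap.comp_assoc, LinearMap.range_mkQ_comp, LinearMap.comp_zero])
      apply hc
      have := LinearMap.congr_fun hc' v
      simp only [LinearMap.comp_apply, hv, map_zero] at this
      exact this.symm
    · rintro ⟨u, rfl⟩
      exact LinearMap.congr_fun hGF u

lemma dualP_of_injCogen {R A : Type} [CommRing R] [CommRing A] [Algebra R A] {E : Type}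
    [AddCommGroup E] [Module A E] (hE : InjCogen A E) {S : Type} [AddCommGroup S] [Module A S]
    [Module R S] [IsScalarTower R A S] {N : Type} [AddCommGroup N] [Module R N]
    (e : N ≃+ (S →ₗ[A] E)) (he : ∀ (r : R) (n : N), e (r • n) = algebraMap R A r • e n) :
    DualP R S N := by
  intro X Y Z _ _ _ _ _ _ f g hgf
  have key := hE.exact_iff (TensorProduct.AlgebraTensorModule.lTensor A S f)
    (TensorProduct.AlgebraTensorModule.lTensor A S g) (by
      rw [← TensorProduct.AlgebraTensorModule.lTensor_comp, hgf]
      ext s; simp)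
  refine Iff.trans (by rfl) (key.trans ?_)
  let _ : Module R E := Module.compHom E (algebraMap R A)
  have _ : IsScalarTower R A E := IsScalarTower.of_algebraMap_smul fun r x => rfl
  -- from maps `Y → N` to maps `S ⊗ Y → E`
  let up : ∀ {Y : Type} [AddCommGroup Y] [Module R Y], (Y →ₗ[R] N) → (TensorProduct R S Y →ₗ[A] E) :=
    fun {Y} _ _ φ => TensorProduct.AlgebraTensorModule.lift
      { toFun := fun s =>
          { toFun := fun y => e (φ y) s
            map_add' := fun a b => by simp
            map_smul' := fun r a => by
              rw [map_smul, he, LinearMap.smul_apply, RingHom.id_apply]; rfl }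
        map_add' := fun a b => by ext; simp
        map_smul' := fun r a => by ext; simp }
  let dn : ∀ {Y : Type} [AddCommGroup Y] [Module R Y], (TensorProduct R S Y →ₗ[A] E) → (Y →ₗ[R] N) :=
    fun {Y} _ _ c =>
      { toFun := fun y => e.symm
          { toFun := fun s => c (s ⊗ₜ y)
            map_add' := fun a b => by rw [TensorProduct.add_tmul, map_add]
            map_smul' := fun a b => by
              rw [RingHom.id_apply, ← map_smul, TensorProduct.smul_tmul'] }
        map_add' := fun a b => by
          apply e.injective
          ext s
          simp [TensorProduct.tmul_add]
        map_smul' := fun r a => by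
          apply e.injective
          ext s
          rw [RingHom.id_apply, he]
          simp only [AddEquiv.apply_symm_apply, LinearMap.coe_mk, AddHom.coe_mk, LinearMap.smul_apply]
          rw [TensorProduct.tmul_smul, ← algebraMap_smul A r (s ⊗ₜ[R] a), map_smul] }
  have up_tmul : ∀ {Y : Type} [AddCommGroup Y] [Module R Y] (φ : Y →ₗ[R] N) (s : S) (y : Y),
      up φ (s ⊗ₜ y) = e (φ y) s := fun φ s y => rfl
  have dn_apply : ∀ {Y : Type} [AddCommGroup Y] [Module R Y] (c : TensorProduct R S Y →ₗ[A] E)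
    (s : S) (y : Y), e (dn c y) s = c (s ⊗ₜ y) := fun c s y => by
      simp [dn]
  constructor
  · intro H φ hφ
    obtain ⟨c', hc'⟩ := H (up φ) (by
      ext s x
      have := LinearMap.congr_fun hφ x
      simp only [LinearMap.comp_apply, LinearMap.zero_apply] at this
      simp [up_tmul, this])
    refine ⟨dn c', LinearMap.ext fun y => e.injective (LinearMap.ext fun s => ?_)⟩
    rw [LinearMap.comp_apply, dn_apply, ← up_tmul, ← hc']
    simp
  · intro H c hc
    obtain ⟨ψ, hψ⟩ := H (dn c) (by
      refine LinearMap.ext fun x => e.injective (LinearMap.ext fun s => ?_)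
      rw [LinearMap.comp_apply, dn_apply]
      have := LinearMap.congr_fun hc (s ⊗ₜ x)
      simpa using this)
    refine ⟨up ψ, ?_⟩
    ext s y
    have := LinearMap.congr_fun hψ y
    simp only [LinearMap.comp_apply] at this
    simp [up_tmul, this, dn_apply]

lemma injCogen_character (R : Type) [CommRing R] : InjCogen R (CharacterModule R) := by
  refine ⟨Module.Flat.iff_characterModule_injective.1 inferInstance, fun V _ _ v hv => ?_⟩
  obtain ⟨c, hc⟩ := CharacterModule.exists_character_apply_ne_zero_of_ne_zero hv
  refine ⟨{ toFun := fun w => c.comp ((LinearMap.toSpanSingleton R V w).toAddMonoidHom)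
            map_add' := fun a b => ?_
            map_smul' := fun r a => ?_ }, fun h => hc ?_⟩
  · refine CharacterModule.ext R fun t => ?_
    change c (t • (a + b)) = c (t • a) + c (t • b)
    rw [smul_add, map_add]
  · refine CharacterModule.ext R fun t => ?_
    change c (t • r • a) = c ((r * t) • a)
    rw [smul_smul, mul_comm]
  · have : c ((1 : R) • v) = 0 := DFunLike.congr_fun h (1 : R)
    rwa [one_smul] at this

lemma dualP_character (R S : Type) [CommRing R] [AddCommGroup S] [Module R S] :
    DualP R S (CharacterModule S) := by
  refine dualP_of_injCogen (A := R) (injCogen_character R)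
    (((CharacterModule.homEquiv (R := R) (A := S) (B := R)).trans
      (CharacterModule.congr (TensorProduct.rid R S))).symm.toAddEquiv) ?_
  intro r n
  exact map_smul ((CharacterModule.homEquiv (R := R) (A := S) (B := R)).trans
      (CharacterModule.congr (TensorProduct.rid R S))).symm r n

lemma injCogen_envelope (A : Type) [CommRing A] [IsLocalRing A] (E : Type) [AddCommGroup E]
    [Module A E] (e : IsLocalRing.ResidueField A →ₗ[A] E) (h : IsInjectiveEnvelope A e) :
    InjCogen A E := by
  refine ⟨h.1, fun V _ _ v hv => ?_⟩
  let s : A →ₗ[A] V := LinearMap.toSpanSingleton A V v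
  let i : (A ⧸ LinearMap.ker s) →ₗ[A] V := (LinearMap.ker s).liftQ s le_rfl
  have hi : Function.Injective i := by
    rw [← LinearMap.ker_eq_bot]
    exact Submodule.ker_liftQ_eq_bot _ _ _ le_rfl
  have hle : LinearMap.ker s ≤ IsLocalRing.maximalIdeal A := by
    apply IsLocalRing.le_maximalIdeal
    intro ht
    apply hv
    have : (1 : A) ∈ LinearMap.ker s := by rw [ht]; trivial
    simpa [s] using this
  let q : A →ₗ[A] E := e ∘ₗ (Algebra.linearMap A (IsLocalRing.ResidueField A))
  have hq : LinearMap.ker s ≤ LinearMap.ker q := by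
    intro a ha
    have : IsLocalRing.residue A a = 0 := (IsLocalRing.residue_eq_zero_iff a).2 (hle ha)
    simp only [q, LinearMap.mem_ker, LinearMap.comp_apply, Algebra.linearMap_apply,
      IsLocalRing.ResidueField.algebraMap_eq, this, map_zero]
  obtain ⟨c, hc⟩ := h.1.out i hi ((LinearMap.ker s).liftQ q hq)
  refine ⟨c, fun h0 => ?_⟩
  have h1 := hc (Submodule.Quotient.mk 1)
  have h2 : i (Submodule.Quotient.mk 1) = v := one_smul A v
  rw [h2, h0] at h1
  have h3 : e 1 = 0 := by
    have : q 1 = 0 := h1.symm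
    simpa [q] using this
  exact one_ne_zero (h.2.1 (h3.trans (map_zero e).symm))


/-- Sign. -/
def ksg {ℓ : ℕ} (A : Type) [CommRing A] (T : Finset (Fin ℓ)) (t : Fin ℓ) : A :=
  (-1 : A) ^ ((T.filter (fun s => s < t)).card)

lemma ksg_sq {ℓ : ℕ} (A : Type) [CommRing A] (T : Finset (Fin ℓ)) (t : Fin ℓ) :
    ksg A T t * ksg A T t = 1 := by
  unfold ksg; rw [← pow_add, ← two_mul, pow_mul]; simp

lemma ksg_erase_lt {ℓ : ℕ} (A : Type) [CommRing A] (T : Finset (Fin ℓ)) (s t : Fin ℓ)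
    (hs : s ∈ T) (h : s < t) : ksg A T t = - ksg A (T.erase s) t := by
  unfold ksg
  rw [Finset.filter_erase]
  have hm : s ∈ T.filter (fun u => u < t) := by simp [hs, h]
  rw [← Finset.card_erase_add_one hm, pow_succ]
  ring

lemma ksg_erase_ge {ℓ : ℕ} (A : Type) [CommRing A] (T : Finset (Fin ℓ)) (s t : Fin ℓ)
    (h : ¬ s < t) : ksg A (T.erase s) t = ksg A T t := by
  unfold ksg
  rw [Finset.filter_erase, Finset.erase_eq_of_notMem]
  simp [h]

lemma ksg_swap {ℓ : ℕ} (A : Type) [CommRing A] (T : Finset (Fin ℓ)) (s t : Fin ℓ)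
    (hs : s ∈ T) (ht : t ∈ T) (h : s ≠ t) :
    ksg A T t * ksg A (T.erase t) s = - (ksg A T s * ksg A (T.erase s) t) := by
  rcases lt_or_gt_of_ne h with h | h
  · rw [ksg_erase_lt A T s t hs h, ksg_erase_ge A T t s (not_lt.2 h.le)]; ring
  · rw [ksg_erase_lt A T t s ht h, ksg_erase_ge A T s t (not_lt.2 h.le)]; ring

/-- Total differential. -/
def totD {A : Type} [CommRing A] {ℓ : ℕ} (x : Fin ℓ → A) (F : Finset (Fin ℓ) → A)
    (T : Finset (Fin ℓ)) : A :=
  ∑ t ∈ T, ksg A T t * x t * F (T.erase t)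

lemma totD_totD {A : Type} [CommRing A] {ℓ : ℕ} (x : Fin ℓ → A) (F : Finset (Fin ℓ) → A)
    (T : Finset (Fin ℓ)) : totD x (totD x F) T = 0 := by
  unfold totD
  simp_rw [Finset.mul_sum]
  rw [Finset.sum_sigma']
  refine Finset.sum_involution (fun a _ => ⟨a.2, a.1⟩) ?_ ?_ ?_ ?_
  · rintro ⟨t, s⟩ h
    simp only [Finset.mem_sigma, Finset.mem_erase] at h
    have := ksg_swap A T s t h.2.2 h.1 h.2.1
    simp only
    rw [Finset.erase_right_comm (a := s) (b := t)]
    linear_combination (x t * x s * F ((T.erase t).erase s)) * this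
  · rintro ⟨t, s⟩ h _ he
    simp only [Finset.mem_sigma, Finset.mem_erase] at h
    simp only [Sigma.mk.injEq] at he
    exact h.2.1 he.1
  · rintro ⟨t, s⟩ h
    simp only [Finset.mem_sigma, Finset.mem_erase] at h ⊢
    exact ⟨h.2.2, h.2.1.symm, h.1⟩
  · rintro ⟨t, s⟩ h
    rfl

/-- Total homotopy. -/
def totH {A : Type} [CommRing A] {ℓ : ℕ} (j : Fin ℓ) (F : Finset (Fin ℓ) → A)
    (T : Finset (Fin ℓ)) : A :=
  if j ∈ T then 0 else ksg A T j * F (insert j T)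

lemma tot_homotopy {A : Type} [CommRing A] {ℓ : ℕ} (x : Fin ℓ → A) (j : Fin ℓ)
    (F : Finset (Fin ℓ) → A) (T : Finset (Fin ℓ)) :
    totD x (totH j F) T + totH j (totD x F) T = x j * F T := by
  by_cases hj : j ∈ T
  · have h2 : totH j (totD x F) T = 0 := if_pos hj
    rw [h2, add_zero]
    unfold totD
    rw [Finset.sum_eq_single_of_mem j hj]
    · unfold totH
      rw [if_neg (by simp), Finset.insert_erase hj, ksg_erase_ge A T j j (lt_irrefl _)]
      linear_combination (x j * F T) * ksg_sq A T j
    · intro t ht htj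
      unfold totH
      rw [if_pos (Finset.mem_erase.2 ⟨htj.symm, hj⟩), mul_zero]
  · have h2 : totH j (totD x F) T = ksg A T j * totD x F (insert j T) := if_neg hj
    rw [h2]
    unfold totD
    rw [Finset.sum_insert hj, Finset.erase_insert hj, mul_add, Finset.mul_sum]
    have hj' : ksg A (insert j T) j = ksg A T j := by
      rw [← ksg_erase_ge A (insert j T) j j (lt_irrefl _), Finset.erase_insert hj]
    have h3 : ∑ t ∈ T, ksg A T t * x t * totH j F (T.erase t) =
        - ∑ t ∈ T, ksg A T j * (ksg A (insert j T) t * x t * F ((insert j T).erase t)) := by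
      rw [← Finset.sum_neg_distrib]
      refine Finset.sum_congr rfl fun t ht => ?_
      have htj : j ≠ t := fun h => hj (h ▸ ht)
      unfold totH
      rw [if_neg (fun h => hj (Finset.mem_of_mem_erase h)),
        ← Finset.erase_insert_of_ne htj]
      have sw := ksg_swap A (insert j T) t j (Finset.mem_insert_of_mem ht)
        (Finset.mem_insert_self _ _) htj.symm
      rw [Finset.erase_insert hj, hj'] at sw
      have h4 : ksg A ((insert j T).erase t) j = ksg A (T.erase t) j := by
        rw [Finset.erase_insert_of_ne htj,
          ← ksg_erase_ge A (insert j (T.erase t)) j j (lt_irrefl _), Finset.erase_insert]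
        exact fun h => hj (Finset.mem_of_mem_erase h)
      rw [h4] at sw
      have e1 := ksg_sq A T t
      have e2 := ksg_sq A (insert j T) t
      linear_combination (x t * F ((insert j T).erase t)) * (ksg A T t * ksg A (insert j T) t * sw
        - ksg A T j * ksg A (insert j T) t * e1 - ksg A T t * ksg A (T.erase t) j * e2)
    rw [h3, hj']
    linear_combination (x j * F T) * ksg_sq A T j

/-- Extension by zero. -/
def kext {A : Type} [CommRing A] {ℓ i : ℕ} (f : KosTerm A ℓ i) (T : Finset (Fin ℓ)) : A :=
  if h : T.card = i then f ⟨T, h⟩ else 0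

lemma kext_coe {A : Type} [CommRing A] {ℓ i : ℕ} (f : KosTerm A ℓ i)
    (T : {s : Finset (Fin ℓ) // s.card = i}) : kext f T.1 = f T := dif_pos T.2

lemma kosD_apply {A : Type} [CommRing A] {ℓ : ℕ} (x : Fin ℓ → A) (i : ℕ) (f : KosTerm A ℓ i)
    (T : {s : Finset (Fin ℓ) // s.card = i + 1}) : kosD A x i f T = totD x (kext f) T.1 := by
  unfold totD
  rw [← Finset.sum_attach]
  change ∑ t ∈ T.1.attach, _ = _
  refine Finset.sum_congr rfl fun t _ => ?_
  have h := kext_coe f ⟨T.1.erase t.1, by rw [Finset.card_erase_of_mem t.2, T.2]; omega⟩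
  rw [h]
  rfl

lemma kext_kosD {A : Type} [CommRing A] {ℓ : ℕ} (x : Fin ℓ → A) (i : ℕ) (f : KosTerm A ℓ i) :
    kext (kosD A x i f) = totD x (kext f) := by
  funext T
  by_cases h : T.card = i + 1
  · rw [kext, dif_pos h, kosD_apply]
  · rw [kext, dif_neg h, totD]
    refine (Finset.sum_eq_zero fun t ht => ?_).symm
    rw [kext, dif_neg, mul_zero]
    intro h'
    apply h
    rw [← h', Finset.card_erase_add_one ht]

lemma kosD_kosD {A : Type} [CommRing A] {ℓ : ℕ} (x : Fin ℓ → A) (i : ℕ) (f : KosTerm A ℓ i) :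
    kosD A x (i + 1) (kosD A x i f) = 0 := by
  funext T
  rw [kosD_apply, kext_kosD, totD_totD]
  rfl

lemma kos_zero_smul {A : Type} [CommRing A] {ℓ : ℕ} (x : Fin ℓ → A) (j : Fin ℓ)
    (f : KosTerm A ℓ 0) (hf : kosD A x 0 f = 0) : x j • f = 0 := by
  funext T
  have h := tot_homotopy x j (kext f) T.1
  rw [← kext_kosD, hf, kext_coe] at h
  rw [Pi.smul_apply, smul_eq_mul, ← h]
  obtain ⟨T, hT⟩ := T
  obtain rfl := Finset.card_eq_zero.1 hT
  simp [totD, totH, kext]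

lemma kos_succ_smul {A : Type} [CommRing A] {ℓ : ℕ} (x : Fin ℓ → A) (j : Fin ℓ) (i : ℕ)
    (f : KosTerm A ℓ (i + 1)) (hf : kosD A x (i + 1) f = 0) :
    x j • f ∈ LinearMap.range (kosD A x i) := by
  refine ⟨fun S => totH j (kext f) S.1, ?_⟩
  funext T
  have h := tot_homotopy x j (kext f) T.1
  rw [← kext_kosD, hf, kext_coe] at h
  rw [Pi.smul_apply, smul_eq_mul, ← h, kosD_apply]
  have h0 : totH j (kext (0 : KosTerm A ℓ (i + 1 + 1))) T.1 = 0 := by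
    simp [totH, kext]
  rw [h0, add_zero]
  congr 1
  funext S
  by_cases hS : S.card = i
  · rw [kext, dif_pos hS]
  · rw [kext, dif_neg hS, totH]
    split_ifs with hj
    · rfl
    · rw [kext, dif_neg, mul_zero]
      rw [Finset.card_insert_of_notMem hj]
      omega

/-- The map `S_i → K^{i+1}` induced by the differential. -/
def kbar {A : Type} [CommRing A] {ℓ : ℕ} (x : Fin ℓ → A) :
    (i : ℕ) → KosCoker A x i →ₗ[A] KosTerm A ℓ (i + 1)
  | 0 => (kosD A x 0) ∘ₗ (LinearMap.pi fun _ => LinearMap.id : A →ₗ[A] KosTerm A ℓ 0)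
  | i + 1 => (LinearMap.range (kosD A x i)).liftQ (kosD A x (i + 1)) (by
      rintro _ ⟨f, rfl⟩
      exact kosD_kosD x i f)

lemma range_kbar {A : Type} [CommRing A] {ℓ : ℕ} (x : Fin ℓ → A) (i : ℕ) :
    LinearMap.range (kbar x i) = LinearMap.range (kosD A x i) := by
  cases i with
  | zero =>
    apply le_antisymm
    · rintro _ ⟨a, rfl⟩
      exact ⟨fun _ => a, rfl⟩
    · rintro _ ⟨f, rfl⟩
      refine ⟨f ⟨∅, rfl⟩, ?_⟩
      refine congrArg (kosD A x 0) ?_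
      funext T
      obtain ⟨T, hT⟩ := T
      obtain rfl := Finset.card_eq_zero.1 hT
      rfl
  | succ i => exact Submodule.range_liftQ _ _ _

/-- The projection `K^{i+1} → S_{i+1}`. -/
def kproj {A : Type} [CommRing A] {ℓ : ℕ} (x : Fin ℓ → A) (i : ℕ) :
    KosTerm A ℓ (i + 1) →ₗ[A] KosCoker A x (i + 1) :=
  (LinearMap.range (kosD A x i)).mkQ

lemma kproj_surj {A : Type} [CommRing A] {ℓ : ℕ} (x : Fin ℓ → A) (i : ℕ) :
    Function.Surjective (kproj x i) := Submodule.mkQ_surjective _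

lemma kbar_exact {A : Type} [CommRing A] {ℓ : ℕ} (x : Fin ℓ → A) (i : ℕ) :
    Function.Exact (kbar x i) (kproj x i) := by
  rw [LinearMap.exact_iff, range_kbar]
  exact Submodule.ker_mkQ _

lemma kbar_ker_smul {A : Type} [CommRing A] {ℓ : ℕ} (x : Fin ℓ → A) (i : ℕ) (s : KosCoker A x i)
    (hs : kbar x i s = 0) (j : Fin ℓ) : x j • s = 0 := by
  cases i with
  | zero =>
    have := kos_zero_smul x j (fun _ => s) hs
    exact congrFun this ⟨∅, rfl⟩
  | succ i =>
    obtain ⟨f, rfl⟩ := kproj_surj x i s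
    have := kos_succ_smul x j i f hs
    exact (Submodule.Quotient.mk_eq_zero _).2 this

lemma kbar_zero_mem {A : Type} [CommRing A] {ℓ : ℕ} (x : Fin ℓ → A) (a : KosCoker A x 0)
    (T : {s : Finset (Fin ℓ) // s.card = 0 + 1}) :
    kbar x 0 a T ∈ Ideal.span (Set.range x) := by
  change kosD A x 0 _ T ∈ _
  rw [kosD_apply]
  refine Ideal.sum_mem _ fun t _ => ?_
  refine Ideal.mul_mem_right _ _ (Ideal.mul_mem_left _ _ (Ideal.subset_span ⟨t, rfl⟩))


lemma ses_mk {R : Type} [Ring R] {X Y Z : Type} [AddCommGroup X] [Module R X] [AddCommGroup Y]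
    [Module R Y] [AddCommGroup Z] [Module R Z] (f : X →ₗ[R] Y) (g : Y →ₗ[R] Z)
    (hf : Function.Injective f) (hfg : Function.Exact f g) (hg : Function.Surjective g) :
    (ShortComplex.moduleCatMk f g hfg.linearMap_comp_eq_zero).ShortExact where
  exact := (ShortComplex.ShortExact.moduleCat_exact_iff_function_exact _).2 hfg
  mono_f := (ModuleCat.mono_iff_injective _).2 hf
  epi_g := (ModuleCat.epi_iff_surjective _).2 hg

section
variable {R : Type} [Ring R] {X Y Z : Type} [AddCommGroup X] [Module R X] [AddCommGroup Y]
    [Module R Y] [AddCommGroup Z] [Module R Z] (f : X →ₗ[R] Y) (g : Y →ₗ[R] Z)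
    (hf : Function.Injective f) (hfg : Function.Exact f g) (hg : Function.Surjective g)

lemma ext_cov1 (hf : Function.Injective f) (hfg : Function.Exact f g) (hg : Function.Surjective g)
    (M : ModuleCat.{0} R) (n : ℕ) (h3 : extV R M (ModuleCat.of R Z) n)
    (h2 : extV R M (ModuleCat.of R Y) (n + 1)) : extV R M (ModuleCat.of R X) (n + 1) := by
  rw [extV_iff] at *
  refine subsingleton_of_forall_eq 0 fun e => ?_
  obtain ⟨e', he'⟩ := Abelian.Ext.covariant_sequence_exact₁ M (ses_mk f g hf hfg hg) e
    (h2.elim _ _) rfl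
  have h0 : e' = 0 := h3.elim _ _
  rw [h0, Abelian.Ext.zero_comp] at he'
  exact he'.symm

lemma ext_cov3 (hf : Function.Injective f) (hfg : Function.Exact f g) (hg : Function.Surjective g)
    (M : ModuleCat.{0} R) (n : ℕ) (h2 : extV R M (ModuleCat.of R Y) n)
    (h1 : extV R M (ModuleCat.of R X) (n + 1)) : extV R M (ModuleCat.of R Z) n := by
  rw [extV_iff] at *
  refine subsingleton_of_forall_eq 0 fun e => ?_
  obtain ⟨e', he'⟩ := Abelian.Ext.covariant_sequence_exact₃ M (ses_mk f g hf hfg hg) e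
    rfl (h1.elim _ _)
  have h0 : e' = 0 := h2.elim _ _
  rw [h0, Abelian.Ext.zero_comp] at he'
  exact he'.symm

lemma ext_cov_surj (hf : Function.Injective f) (hfg : Function.Exact f g)
    (hg : Function.Surjective g) {M : Type} [AddCommGroup M] [Module R M]
    (h1 : extV R (ModuleCat.of R M) (ModuleCat.of R X) 1) (φ : M →ₗ[R] Z) :
    ∃ ψ : M →ₗ[R] Y, g ∘ₗ ψ = φ := by
  rw [extV_iff] at h1
  obtain ⟨e', he'⟩ := Abelian.Ext.covariant_sequence_exact₃ (ModuleCat.of R M)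
    (ses_mk f g hf hfg hg) (Abelian.Ext.mk₀ (ModuleCat.ofHom φ)) rfl (h1.elim _ _)
  obtain ⟨ψ, rfl⟩ := (Abelian.Ext.homEquiv₀.symm.surjective e')
  refine ⟨ψ.hom, ?_⟩
  rw [Abelian.Ext.homEquiv₀_symm_apply, Abelian.Ext.mk₀_comp_mk₀] at he'
  have := (Abelian.Ext.mk₀_bijective _ _).1 he'
  exact congrArg ModuleCat.Hom.hom this

lemma ext_con3 (hf : Function.Injective f) (hfg : Function.Exact f g) (hg : Function.Surjective g)
    (M : ModuleCat.{0} R) (n : ℕ) (h1 : extV R (ModuleCat.of R X) M n)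
    (h2 : extV R (ModuleCat.of R Y) M (n + 1)) : extV R (ModuleCat.of R Z) M (n + 1) := by
  rw [extV_iff] at *
  refine subsingleton_of_forall_eq 0 fun e => ?_
  obtain ⟨e', he'⟩ := Abelian.Ext.contravariant_sequence_exact₃ (ses_mk f g hf hfg hg) M e
    (h2.elim _ _) (add_comm 1 n)
  have h0 : e' = 0 := h1.elim _ _
  rw [h0, Abelian.Ext.comp_zero] at he'
  exact he'.symm

lemma ext_con1 (hf : Function.Injective f) (hfg : Function.Exact f g) (hg : Function.Surjective g)
    (M : ModuleCat.{0} R) (n : ℕ) (h2 : extV R (ModuleCat.of R Y) M n)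
    (h3 : extV R (ModuleCat.of R Z) M (n + 1)) : extV R (ModuleCat.of R X) M n := by
  rw [extV_iff] at *
  refine subsingleton_of_forall_eq 0 fun e => ?_
  obtain ⟨e', he'⟩ := Abelian.Ext.contravariant_sequence_exact₁ (ses_mk f g hf hfg hg) M e
    (add_comm 1 n) (h3.elim _ _)
  have h0 : e' = 0 := h2.elim _ _
  rw [h0, Abelian.Ext.comp_zero] at he'
  exact he'.symm

lemma ext_con_surj (hf : Function.Injective f) (hfg : Function.Exact f g)
    (hg : Function.Surjective g) {M : Type} [AddCommGroup M] [Module R M]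
    (h3 : extV R (ModuleCat.of R Z) (ModuleCat.of R M) 1) (φ : X →ₗ[R] M) :
    ∃ ψ : Y →ₗ[R] M, ψ ∘ₗ f = φ := by
  rw [extV_iff] at h3
  obtain ⟨e', he'⟩ := Abelian.Ext.contravariant_sequence_exact₁ (ses_mk f g hf hfg hg)
    (ModuleCat.of R M) (Abelian.Ext.mk₀ (ModuleCat.ofHom φ)) rfl (h3.elim _ _)
  obtain ⟨ψ, rfl⟩ := (Abelian.Ext.homEquiv₀.symm.surjective e')
  refine ⟨ψ.hom, ?_⟩
  rw [Abelian.Ext.homEquiv₀_symm_apply, Abelian.Ext.mk₀_comp_mk₀] at he'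
  have := (Abelian.Ext.mk₀_bijective _ _).1 he'
  exact congrArg ModuleCat.Hom.hom this

end

lemma extV_of_injective {R : Type} [Ring R] (M : ModuleCat.{0} R) (I : Type) [AddCommGroup I]
    [Module R I] (hI : Module.Injective R I) (n : ℕ) : extV R M (ModuleCat.of R I) (n + 1) := by
  rw [extV_iff]
  have : Injective (ModuleCat.of R I) := Module.injective_object_of_injective_module R I
  exact subsingleton_of_forall_eq 0 fun e => Abelian.Ext.eq_zero_of_injective e

lemma extV_of_projective {R : Type} [Ring R] (M : ModuleCat.{0} R) (I : Type) [AddCommGroup I]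
    [Module R I] [Module.Projective R I] (n : ℕ) : extV R (ModuleCat.of R I) M (n + 1) := by
  rw [extV_iff]
  have : Projective (ModuleCat.of R I) := (IsProjective.iff_projective I).1 inferInstance
  exact Abelian.Ext.subsingleton_of_projective _ _ _

lemma extV_pi {R : Type} [CommRing R] (M : ModuleCat.{0} R) (ι N : Type) [AddCommGroup N]
    [Module R N] (n : ℕ) (h : extV R M (ModuleCat.of R N) n) :
    extV R M (ModuleCat.of R (ι → N)) n := by
  let P := projectiveResolution M
  rw [extV_iff_res R M _ P] at *
  intro f hf
  have h' := fun i : ι => h (f ≫ ModuleCat.ofHom (LinearMap.proj i : (ι → N) →ₗ[R] N)) (by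
    rw [← Category.assoc, hf, Limits.zero_comp])
  choose g hg using h'
  refine ⟨ModuleCat.ofHom (LinearMap.pi fun i => (g i).hom), ?_⟩
  ext y i
  exact LinearMap.congr_fun (congrArg ModuleCat.Hom.hom (hg i)) y

/-- Small depth vanishing. -/
lemma ext_of_depth {A : Type} [CommRing A] [IsLocalRing A] (M : Type) [AddCommGroup M] [Module A M]
    {k : ℕ} (h : (k : ℕ∞) ≤ rdepth A M) (j : ℕ) (hj : j < k) :
    extV A (ModuleCat.of A (IsLocalRing.ResidueField A)) (ModuleCat.of A M) j := by
  by_contra hn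
  have : rdepth A M ≤ (j : ℕ∞) := sInf_le ⟨j, rfl, hn⟩
  exact absurd (Nat.cast_le.1 (h.trans this)) (not_le.2 hj)

section
variable {A : Type} [CommRing A] [IsLocalRing A] {ℓ : ℕ} (x : Fin ℓ → A)

lemma kos_step (hx : Ideal.span (Set.range x) = IsLocalRing.maximalIdeal A) (i : ℕ)
    (h : extV A (ModuleCat.of A (IsLocalRing.ResidueField A)) (ModuleCat.of A (KosCoker A x i)) 0) :
    Function.Injective (kbar x i) := by
  rw [extV_zero_iff] at h
  rw [injective_iff_map_eq_zero]
  intro s hs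
  have hm : IsLocalRing.maximalIdeal A ≤
      LinearMap.ker (LinearMap.toSpanSingleton A (KosCoker A x i) s) := by
    rw [← hx]
    refine Ideal.span_le.2 ?_
    rintro _ ⟨j, rfl⟩
    exact kbar_ker_smul x i s hs j
  let φ : IsLocalRing.ResidueField A →ₗ[A] KosCoker A x i :=
    Submodule.liftQ (R := A) (M := A) (IsLocalRing.maximalIdeal A)
      (LinearMap.toSpanSingleton A (KosCoker A x i) s) hm
  have h1 := congrArg ModuleCat.Hom.hom (h (ModuleCat.ofHom φ))
  have h2 : (1 : A) • s = 0 := LinearMap.congr_fun h1 (IsLocalRing.residue A 1)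
  rwa [one_smul] at h2

lemma kos_ext (hx : Ideal.span (Set.range x) = IsLocalRing.maximalIdeal A) (k : ℕ)
    (hk : (k : ℕ∞) ≤ rdepth A A) (i : ℕ) : ∀ j : ℕ, j + i < k →
    extV A (ModuleCat.of A (IsLocalRing.ResidueField A)) (ModuleCat.of A (KosCoker A x i)) j := by
  induction i with
  | zero => intro j hj; exact ext_of_depth A hk j hj
  | succ i ih =>
    intro j hj
    exact ext_cov3 (kbar x i) (kproj x i) (kos_step x hx i (ih 0 (by omega))) (kbar_exact x i)
      (kproj_surj x i) _ j (extV_pi _ _ _ _ (ext_of_depth A hk j (by omega))) (ih _ (by omega))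

lemma kbar_inj (hx : Ideal.span (Set.range x) = IsLocalRing.maximalIdeal A) (k : ℕ)
    (hk : (k : ℕ∞) ≤ rdepth A A) (i : ℕ) (hi : i < k) : Function.Injective (kbar x i) :=
  kos_step x hx i (kos_ext x hx k hk i 0 (by omega))

lemma kos_projDim (hx : Ideal.span (Set.range x) = IsLocalRing.maximalIdeal A) (k : ℕ)
    (hk : (k : ℕ∞) ≤ rdepth A A) (i : ℕ) (hi : i ≤ k) :
    projDimLE A (ModuleCat.of A (KosCoker A x i)) i := by
  induction i with
  | zero =>
    intro N j hj
    obtain ⟨j, rfl⟩ : ∃ m, j = m + 1 := ⟨j - 1, by omega⟩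
    exact extV_of_projective (R := A) N A j
  | succ i ih =>
    intro N j hj
    obtain ⟨j, rfl⟩ : ∃ m, j = m + 1 := ⟨j - 1, by omega⟩
    exact ext_con3 (kbar x i) (kproj x i) (kbar_inj x hx k hk i (by omega)) (kbar_exact x i)
      (kproj_surj x i) N j (ih (by omega) N j (by omega)) (extV_of_projective _ _ _)

lemma kos_not_projDim (hx : Ideal.span (Set.range x) = IsLocalRing.maximalIdeal A) (k : ℕ)
    (hk : (k : ℕ∞) ≤ rdepth A A) (i : ℕ) (hi : i + 1 ≤ k) :
    ¬ extV A (ModuleCat.of A (KosCoker A x (i + 1)))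
      (ModuleCat.of A (IsLocalRing.ResidueField A)) (i + 1) := by
  induction i with
  | zero =>
    intro h
    obtain ⟨ψ, hψ⟩ := ext_con_surj (kbar x 0) (kproj x 0) (kbar_inj x hx k hk 0 (by omega))
      (kbar_exact x 0) (kproj_surj x 0) h
      (Algebra.linearMap A (IsLocalRing.ResidueField A) : A →ₗ[A] _)
    have h1 : ψ (kbar x 0 (1 : A)) = (1 : IsLocalRing.ResidueField A) :=
      (LinearMap.congr_fun hψ (1 : A)).trans (map_one (algebraMap A _))
    have h2 : ψ (kbar x 0 (1 : A)) = 0 := by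
      rw [pi_eq_sum_univ' (kbar x 0 (1 : A)), map_sum]
      refine Finset.sum_eq_zero fun T _ => ?_
      rw [map_smul, Algebra.smul_def]
      have : algebraMap A (IsLocalRing.ResidueField A) (kbar x 0 (1 : A) T) = 0 := by
        rw [IsLocalRing.ResidueField.algebraMap_eq, IsLocalRing.residue_eq_zero_iff, ← hx]
        exact kbar_zero_mem x _ T
      rw [this, zero_mul]
    exact one_ne_zero (h1.symm.trans h2)
  | succ i ih =>
    intro h
    exact ih (by omega) (ext_con1 (kbar x (i+1)) (kproj x (i+1))
      (kbar_inj x hx k hk (i+1) (by omega)) (kbar_exact x (i+1)) (kproj_surj x (i+1)) _ (i+1)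
      (extV_of_projective _ _ _) h)
end

section
variable {R A : Type} [CommRing R] [CommRing A] [Algebra R A] {ℓ : ℕ} (x : Fin ℓ → A)

instance kosTower (i : ℕ) : IsScalarTower R A (KosCoker A x i) :=
  IsScalarTower.of_algebraMap_smul fun _ _ => rfl

/-- exact dual sequence -/
lemma char_exact {X Y Z : Type} [AddCommGroup X] [Module R X] [AddCommGroup Y]
    [Module R Y] [AddCommGroup Z] [Module R Z] (f : X →ₗ[R] Y) (g : Y →ₗ[R] Z)
    (hfg : Function.Exact f g) (hg : Function.Surjective g) :
    Function.Exact (CharacterModule.dual g) (CharacterModule.dual f) := by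
  intro c
  constructor
  · intro hc
    have hker : LinearMap.ker g.toAddMonoidHom.toIntLinearMap ≤
        LinearMap.ker (AddMonoidHom.toIntLinearMap c) := by
      intro y hy
      obtain ⟨u, rfl⟩ := (hfg y).1 hy
      exact DFunLike.congr_fun hc u
    have hs : Function.Surjective g.toAddMonoidHom.toIntLinearMap := hg
    let q := (LinearMap.ker g.toAddMonoidHom.toIntLinearMap).liftQ
      (AddMonoidHom.toIntLinearMap c) hker ∘ₗ
      (g.toAddMonoidHom.toIntLinearMap.quotKerEquivOfSurjective hs).symm.toLinearMap
    refine ⟨q.toAddMonoidHom, ?_⟩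
    refine DFunLike.ext _ _ fun y => ?_
    have e : (g.toAddMonoidHom.toIntLinearMap.quotKerEquivOfSurjective hs).symm (g y) =
        Submodule.Quotient.mk y := by
      rw [LinearEquiv.symm_apply_eq]; rfl
    change (LinearMap.ker g.toAddMonoidHom.toIntLinearMap).liftQ
      (AddMonoidHom.toIntLinearMap c) hker
      ((g.toAddMonoidHom.toIntLinearMap.quotKerEquivOfSurjective hs).symm (g y)) = c y
    rw [e]; rfl
  · rintro ⟨c', rfl⟩
    refine DFunLike.ext _ _ fun y => ?_
    change c' (g (f y)) = 0
    rw [hfg.apply_apply_eq_zero, map_zero]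

variable (R) in
/-- restriction of scalars of kbar -/
def kbarR (i : ℕ) : KosCoker A x i →ₗ[R] KosTerm A ℓ (i + 1) := (kbar x i).restrictScalars R

variable (R) in
/-- restriction of scalars of kproj -/
def kprojR (i : ℕ) : KosTerm A ℓ (i + 1) →ₗ[R] KosCoker A x (i + 1) :=
  (kproj x i).restrictScalars R

lemma kos_char_inj [Module.Flat R A] (i : ℕ) :
    Module.Injective R (CharacterModule (KosTerm A ℓ i)) :=
  Module.Flat.iff_characterModule_injective.1 (Module.Flat.trans R A _)

lemma kos_injDim [Module.Flat R A] (k : ℕ) (hinj : ∀ i < k, Function.Injective (kbar x i))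
    (i : ℕ) (hi : i ≤ k) :
    injDimLE R (ModuleCat.of R (CharacterModule (KosCoker A x i))) i := by
  induction i with
  | zero =>
    intro N j hj
    obtain ⟨j, rfl⟩ : ∃ m, j = m + 1 := ⟨j - 1, by omega⟩
    have : Module.Flat R (KosCoker A x 0) :=
      Module.Flat.of_linearEquiv (N := KosCoker A x 0) (M := A)
        { toFun := fun a => a, invFun := fun a => a, map_add' := fun _ _ => rfl,
          map_smul' := fun r a => (Algebra.smul_def r (show A from a)).symm,
          left_inv := fun _ => rfl, right_inv := fun _ => rfl }
    exact extV_of_injective N _ (Module.Flat.iff_characterModule_injective.1 this) j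
  | succ i ih =>
    intro N j hj
    obtain ⟨j, rfl⟩ : ∃ m, j = m + 1 := ⟨j - 1, by omega⟩
    exact ext_cov1 (CharacterModule.dual (kprojR R x i)) (CharacterModule.dual (kbarR R x i))
      (CharacterModule.dual_injective_of_surjective _ (kproj_surj x i))
      (char_exact _ _ (kbar_exact x i) (kproj_surj x i))
      (CharacterModule.dual_surjective_of_injective _ (hinj i (by omega))) N j
      (ih (by omega) N j (by omega)) (extV_of_injective _ _ (kos_char_inj _) _)

lemma char_smul_zero {Y : Type} [AddCommGroup Y] [Module R Y] [Module A Y] [IsScalarTower R A Y]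
    (p : Ideal R) (c : CharacterModule Y) (hc : ∀ r ∈ p, r • c = 0) (a : A)
    (ha : a ∈ Ideal.map (algebraMap R A) p) : ∀ y : Y, c (a • y) = 0 := by
  refine Submodule.span_induction (p := fun a _ => ∀ y : Y, c (a • y) = 0) ?_ ?_ ?_ ?_ ha
  · rintro _ ⟨r, hr, rfl⟩ y
    rw [algebraMap_smul]
    exact DFunLike.congr_fun (hc r hr) y
  · intro y; rw [zero_smul, map_zero]
  · intro a b _ _ ha hb y
    rw [add_smul, map_add, ha, hb, add_zero]
  · intro a b _ hb y
    rw [smul_eq_mul, mul_comm, mul_smul]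
    exact hb _

lemma kos_not_injDim [Module.Flat R A] [IsLocalRing A] (p : Ideal R)
    (hp : Ideal.map (algebraMap R A) p = IsLocalRing.maximalIdeal A)
    (hx : Ideal.span (Set.range x) = IsLocalRing.maximalIdeal A)
    (k : ℕ) (hinj : ∀ i < k, Function.Injective (kbar x i))
    (i : ℕ) (hi : i + 1 ≤ k) :
    ¬ extV R (ModuleCat.of R (IsLocalRing.ResidueField A))
      (ModuleCat.of R (CharacterModule (KosCoker A x (i + 1)))) (i + 1) := by
  induction i with
  | zero =>
    intro h
    obtain ⟨χ, hχ⟩ := CharacterModule.exists_character_apply_ne_zero_of_ne_zero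
      (one_ne_zero (α := IsLocalRing.ResidueField A))
    let φ : IsLocalRing.ResidueField A →ₗ[R] CharacterModule (KosCoker A x 0) :=
      { toFun := fun c => χ.comp ((LinearMap.toSpanSingleton A
          (IsLocalRing.ResidueField A) c).toAddMonoidHom : A →+ _)
        map_add' := fun c d => by
          refine DFunLike.ext _ _ fun a => ?_
          have key : ∀ a : A, χ (a • (c + d)) = χ (a • c) + χ (a • d) := fun a => by
            rw [smul_add, map_add]
          exact key a
        map_smul' := fun r c => by
          refine DFunLike.ext _ _ fun a => ?_
          have key : ∀ a : A, χ (a • (r • c)) = χ ((algebraMap R A r * a) • c) := fun a => by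
            rw [mul_smul, algebraMap_smul, smul_comm]
          exact key a }
    obtain ⟨ψ, hψ⟩ := ext_cov_surj (CharacterModule.dual (kprojR R x 0))
      (CharacterModule.dual (kbarR R x 0))
      (CharacterModule.dual_injective_of_surjective _ (kproj_surj x 0))
      (char_exact _ _ (kbar_exact x 0) (kproj_surj x 0))
      (CharacterModule.dual_surjective_of_injective _ (hinj 0 (by omega))) h φ
    have h1 : ψ 1 (kbar x 0 (1 : A)) = χ ((1 : A) • 1) :=
      DFunLike.congr_fun (LinearMap.congr_fun hψ 1) (1 : A)
    rw [one_smul] at h1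
    apply hχ
    rw [← h1, pi_eq_sum_univ' (kbar x 0 (1 : A)), map_sum]
    refine Finset.sum_eq_zero fun T _ => ?_
    refine char_smul_zero (A := A) p (ψ 1) ?_ _ ?_ _
    · intro r hr
      rw [← map_smul, ← algebraMap_smul A r (1 : IsLocalRing.ResidueField A), Algebra.smul_def,
        IsLocalRing.ResidueField.algebraMap_eq, (IsLocalRing.residue_eq_zero_iff _).2, zero_mul,
        map_zero]
      rw [← hp]
      exact Ideal.mem_map_of_mem _ hr
    · rw [hp, ← hx]
      exact kbar_zero_mem x _ T
  | succ i ih =>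
    intro h
    exact ih (by omega) (ext_cov3 (CharacterModule.dual (kprojR R x (i+1)))
      (CharacterModule.dual (kbarR R x (i+1)))
      (CharacterModule.dual_injective_of_surjective _ (kproj_surj x (i+1)))
      (char_exact _ _ (kbar_exact x (i+1)) (kproj_surj x (i+1)))
      (CharacterModule.dual_surjective_of_injective _ (hinj (i+1) (by omega))) _ (i+1)
      (extV_of_injective _ _ (kos_char_inj _) _) h)
end

/-- for a prime `p` of a commutative noetherian ring `R` and
`0 < k ≤ depth(R_p)`, the Koszul cocycle module `S_k(pR_p; R_p)` (defined using any
finite generating set of `pR_p`) has flat dimension exactly `k` over `R` and projective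
dimension exactly `k` over `R_p`; its character dual and its Matlis dual are pure-injective
of injective dimension exactly `k`, and the Tor-orthogonal of `S_k(pR_p; R_p)` coincides
with the Ext-left-orthogonals of these duals. -/
theorem stmt7 (R : Type) [CommRing R] [IsNoetherianRing R] (p : PrimeSpectrum R)
    (k : ℕ) (hk : 0 < k) (hkd : (k : ℕ∞) ≤ ringDepthAt R p)
    (ℓ : ℕ) (x : Fin ℓ → Localization.AtPrime p.asIdeal)
    (hx : Ideal.span (Set.range x) =
      Ideal.map (algebraMap R (Localization.AtPrime p.asIdeal)) p.asIdeal) :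
    -- (1) flat dimension exactly k over R, projective dimension exactly k over R_p
    (flatDimLE R (ModuleCat.of R (KosCoker (Localization.AtPrime p.asIdeal) x k)) k ∧
     ¬ flatDimLE R (ModuleCat.of R (KosCoker (Localization.AtPrime p.asIdeal) x k)) (k - 1) ∧
     projDimLE (Localization.AtPrime p.asIdeal)
       (ModuleCat.of (Localization.AtPrime p.asIdeal)
         (KosCoker (Localization.AtPrime p.asIdeal) x k)) k ∧
     ¬ projDimLE (Localization.AtPrime p.asIdeal)
       (ModuleCat.of (Localization.AtPrime p.asIdeal)
         (KosCoker (Localization.AtPrime p.asIdeal) x k)) (k - 1)) ∧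
    -- (2) the character dual is pure-injective of injective dimension exactly k,
    -- and the Tor-orthogonal of S_k equals the Ext-left-orthogonal of the dual
    (PureInjective R (CharacterModule (KosCoker (Localization.AtPrime p.asIdeal) x k)) ∧
     injDimLE R (ModuleCat.of R
       (CharacterModule (KosCoker (Localization.AtPrime p.asIdeal) x k))) k ∧
     ¬ injDimLE R (ModuleCat.of R
       (CharacterModule (KosCoker (Localization.AtPrime p.asIdeal) x k))) (k - 1) ∧
     {M : ModuleCat.{0} R | ∀ j : ℕ, 1 ≤ j →
        torV R (ModuleCat.of R (KosCoker (Localization.AtPrime p.asIdeal) x k)) M j} =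
      {M : ModuleCat.{0} R | ∀ j : ℕ, 1 ≤ j →
        extV R M (ModuleCat.of R
          (CharacterModule (KosCoker (Localization.AtPrime p.asIdeal) x k))) j}) ∧
    -- (2') the same statements for the Matlis dual,
    -- for any injective envelope E of the residue field of R_p
    (∀ (E : Type) (_ : AddCommGroup E) (_ : Module (Localization.AtPrime p.asIdeal) E)
      (e : IsLocalRing.ResidueField (Localization.AtPrime p.asIdeal) →ₗ[Localization.AtPrime p.asIdeal] E),
      IsInjectiveEnvelope (Localization.AtPrime p.asIdeal) e →
      (PureInjective R (RestrictScalars R (Localization.AtPrime p.asIdeal)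
         ((KosCoker (Localization.AtPrime p.asIdeal) x k) →ₗ[Localization.AtPrime p.asIdeal] E)) ∧
       injDimLE R (ModuleCat.of R (RestrictScalars R (Localization.AtPrime p.asIdeal)
         ((KosCoker (Localization.AtPrime p.asIdeal) x k) →ₗ[Localization.AtPrime p.asIdeal] E))) k ∧
       ¬ injDimLE R (ModuleCat.of R (RestrictScalars R (Localization.AtPrime p.asIdeal)
         ((KosCoker (Localization.AtPrime p.asIdeal) x k) →ₗ[Localization.AtPrime p.asIdeal] E))) (k - 1) ∧
       {M : ModuleCat.{0} R | ∀ j : ℕ, 1 ≤ j →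
          torV R (ModuleCat.of R (KosCoker (Localization.AtPrime p.asIdeal) x k)) M j} =
        {M : ModuleCat.{0} R | ∀ j : ℕ, 1 ≤ j →
          extV R M (ModuleCat.of R (RestrictScalars R (Localization.AtPrime p.asIdeal)
            ((KosCoker (Localization.AtPrime p.asIdeal) x k) →ₗ[Localization.AtPrime p.asIdeal] E))) j})) := by
  have hp : Ideal.map (algebraMap R (Localization.AtPrime p.asIdeal)) p.asIdeal =
      IsLocalRing.maximalIdeal (Localization.AtPrime p.asIdeal) :=
    Localization.AtPrime.map_eq_maximalIdeal
  have hx' := hx.trans hp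
  have hflat : Module.Flat R (Localization.AtPrime p.asIdeal) :=
    IsLocalization.flat _ p.asIdeal.primeCompl
  have hinj : ∀ i < k, Function.Injective (kbar x i) := fun i hi => kbar_inj x hx' k hkd i hi
  have dC := dualP_character R (KosCoker (Localization.AtPrime p.asIdeal) x k)
  have hI := kos_injDim (R := R) x k hinj k le_rfl
  have hkk : k - 1 < k := by omega
  have hnI : ¬ extV R
      (ModuleCat.of R (IsLocalRing.ResidueField (Localization.AtPrime p.asIdeal)))
      (ModuleCat.of R (CharacterModule (KosCoker (Localization.AtPrime p.asIdeal) x k))) k := by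
    obtain ⟨m, rfl⟩ : ∃ m, k = m + 1 := ⟨k - 1, by omega⟩
    exact kos_not_injDim (R := R) x p.asIdeal hp hx' (m + 1) hinj m le_rfl
  have hnP : ¬ extV (Localization.AtPrime p.asIdeal)
      (ModuleCat.of (Localization.AtPrime p.asIdeal)
        (KosCoker (Localization.AtPrime p.asIdeal) x k))
      (ModuleCat.of (Localization.AtPrime p.asIdeal)
        (IsLocalRing.ResidueField (Localization.AtPrime p.asIdeal))) k := by
    obtain ⟨m, rfl⟩ : ∃ m, k = m + 1 := ⟨k - 1, by omega⟩
    exact kos_not_projDim x hx' (m + 1) hkd m le_rfl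
  refine ⟨⟨fun N j hj => (dC.tor_iff N j).2 (hI N j hj),
    fun h => hnI ((dC.tor_iff _ k).1 (h _ k hkk)), kos_projDim x hx' k hkd k le_rfl,
    fun h => hnP (h _ k hkk)⟩,
    ⟨dC.pureInjective, hI, fun h => hnI (h _ k hkk), ?_⟩, ?_⟩
  · ext M
    exact forall_congr' fun j => imp_congr_right fun _ => dC.tor_iff M j
  · intro E _ _ e he
    have dM : DualP R (KosCoker (Localization.AtPrime p.asIdeal) x k)
        (RestrictScalars R (Localization.AtPrime p.asIdeal)
          ((KosCoker (Localization.AtPrime p.asIdeal) x k)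
            →ₗ[Localization.AtPrime p.asIdeal] E)) :=
      dualP_of_injCogen (injCogen_envelope (Localization.AtPrime p.asIdeal) E e he)
        (RestrictScalars.addEquiv R (Localization.AtPrime p.asIdeal) _)
        (fun r n => RestrictScalars.addEquiv_map_smul R (Localization.AtPrime p.asIdeal) _ r n)
    refine ⟨dM.pureInjective, fun N j hj => (dM.tor_iff N j).1 ((dC.tor_iff N j).2 (hI N j hj)),
      fun h => hnI ((dC.tor_iff _ k).1 ((dM.tor_iff _ k).2 (h _ k hkk))), ?_⟩
    ext M
    exact forall_congr' fun j => imp_congr_right fun _ => dM.tor_iff M j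
end
end
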